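/- Let N ≥ 2 and 1 ≤ m < N-2 be integers, 0 < a < b reals, and p ≥ 2(N-m)/(N-m-2). If u ∈ C²(Ω) ∩ C¹(Ω̄) satisfies -Δu = |u|^{p-2}u in Ω, u = 0 on ∂Ω, and |∇u|², |u|^p ∈ L¹(Ω), then u ≡ 0 on Ω. -/

import Mathlib

open MeasureTheory Set

noncomputable section

/-- `ℝ^k` as a Euclidean space. -/
abbrev E (k : ℕ) : Type := EuclideanSpace ℝ (Fin k)

/-- The cylindrical shell `Ω = {(y,z) : a < |y| < b}` in `ℝ^{m+1} × ℝ^{N-m-1}`. -/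
def Omega (N m : ℕ) (a b : ℝ) : Set (E (m + 1) × E (N - m - 1)) :=
  {x | a < ‖x.1‖ ∧ ‖x.1‖ < b}

/-- Second directional derivative of `u` at `x` in direction `v`. -/
def dd2 {V : Type} [NormedAddCommGroup V] [NormedSpace ℝ V] (u : V → ℝ) (x v : V) : ℝ :=
  fderiv ℝ (fun y => fderiv ℝ u y v) x v

/-- The Euclidean Laplacian (sum of second partial derivatives) on `ℝ^{m+1} × ℝ^{N-m-1}`. -/
def lap (N m : ℕ) (u : E (m + 1) × E (N - m - 1) → ℝ) (x : E (m + 1) × E (N - m - 1)) : ℝ :=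
  (∑ i : Fin (m + 1), dd2 u x (EuclideanSpace.single i 1, 0)) +
  (∑ j : Fin (N - m - 1), dd2 u x (0, EuclideanSpace.single j 1))

/-- `|∇u|²`, the squared Euclidean norm of the gradient of `u`. -/
def gradSq (N m : ℕ) (u : E (m + 1) × E (N - m - 1) → ℝ) (x : E (m + 1) × E (N - m - 1)) : ℝ :=
  (∑ i : Fin (m + 1), (fderiv ℝ u x (EuclideanSpace.single i 1, 0)) ^ 2) +
  (∑ j : Fin (N - m - 1), (fderiv ℝ u x (0, EuclideanSpace.single j 1)) ^ 2)

/-!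
The proof is a Pohozaev identity with a multiplier adapted to the shell. For a vector field `X` and
a weight `c`, the field `(⟪X, ∇u⟫ + c u) ∇u - (|∇u|² / 2 - F(u)) X`, with `F' = f` and `-Δu = f(u)`,
has a divergence involving only first derivatives of `u`. Writing `x = y + z` with `y ∈ K`,
`z ∈ Kᗮ`, `n = dim K` and `k = dim Kᗮ`, take `X = φ(|y|) y + z`, where `φ` vanishes on the inner
boundary and is such that `div X = 1 + k`. As `u = 0` on the boundary, the field has normal
component `|∇u|² ⟪X, ν⟫ / 2` there, which is zero on the inner boundary and nonnegative on the outer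
one, so that the divergence has nonnegative integral. For `c = (k - 1) / 2` and a nonlinearity that
is at least critical in dimension `k + 1`, the divergence is at most `-(n - 1) φ(|y|)` times the
square of the component of `∇u` along `K`. That component hence vanishes, and so does `u` by
Poincaré's inequality.

The shell is unbounded, so the divergence theorem is used only as an inequality: the field is cut
off at infinity, where `|∇u|²`, `F(u)` and `u²` are integrable (the latter by Poincaré), and then
near the boundary.
-/

namespace Pohozaev

open Filter Topology InnerProductSpace Module
open scoped Gradient Laplacian RealInnerProductSpace ContDiff

section Divergence

variable {V : Type*} [NormedAddCommGroup V] [NormedSpace ℝ V]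

/-- The divergence `∑ i, ∂ᵢ Wᵢ` of a vector field, as the trace of its derivative. It has the junk
value `0` where `W` is not differentiable. -/
def divergence (W : V → V) (x : V) : ℝ :=
  LinearMap.trace ℝ V (fderiv ℝ W x)

theorem divergence_add {W Z : V → V} {x : V} (hW : DifferentiableAt ℝ W x)
    (hZ : DifferentiableAt ℝ Z x) :
    divergence (fun y => W y + Z y) x = divergence W x + divergence Z x := by
  simp [divergence, fderiv_fun_add hW hZ]

theorem divergence_sub {W Z : V → V} {x : V} (hW : DifferentiableAt ℝ W x)
    (hZ : DifferentiableAt ℝ Z x) :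
    divergence (fun y => W y - Z y) x = divergence W x - divergence Z x := by
  simp [divergence, fderiv_fun_sub hW hZ]

theorem divergence_const_smul {W : V → V} {x : V} (hW : DifferentiableAt ℝ W x) (c : ℝ) :
    divergence (fun y => c • W y) x = c * divergence W x := by
  simp [divergence, fderiv_fun_const_smul hW]

theorem divergence_eq_zero_of_eventuallyEq {W : V → V} {x : V} (hW : W =ᶠ[𝓝 x] 0) :
    divergence W x = 0 := by
  simp [divergence, hW.fderiv_eq]

theorem divergence_eq_sum_coord {ι : Type*} [Fintype ι] (e : Basis ι ℝ V) (W : V → V) (x : V) :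
    divergence W x = ∑ i, e.coord i (fderiv ℝ W x (e i)) := by
  classical
  simp [divergence, LinearMap.trace_eq_matrix_trace ℝ e, Matrix.trace, LinearMap.toMatrix_apply]

variable [FiniteDimensional ℝ V]

theorem divergence_smul {φ : V → ℝ} {W : V → V} {x : V} (hφ : DifferentiableAt ℝ φ x)
    (hW : DifferentiableAt ℝ W x) :
    divergence (fun y => φ y • W y) x = φ x * divergence W x + fderiv ℝ φ x (W x) := by
  have hsmulRight : (((fderiv ℝ φ x).smulRight (W x) : V →L[ℝ] V) : V →ₗ[ℝ] V) =
      (fderiv ℝ φ x : V →ₗ[ℝ] ℝ).smulRight (W x) := rfl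
  rw [divergence, fderiv_fun_smul hφ hW, ContinuousLinearMap.toLinearMap_add, map_add, hsmulRight,
    LinearMap.trace_smulRight, ContinuousLinearMap.toLinearMap_smul, map_smul]
  rfl

theorem continuousOn_divergence {W : V → V} {s : Set V} (hs : IsOpen s) (hW : ContDiffOn ℝ 1 W s) :
    ContinuousOn (divergence W) s := by
  rw [funext (divergence_eq_sum_coord (finBasis ℝ V) W)]
  exact continuousOn_finsetSum _ fun i _ =>
    (LinearMap.continuous_of_finiteDimensional _).comp_continuousOn
      ((hW.continuousOn_fderiv_of_isOpen hs le_rfl).clm_apply continuousOn_const)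

variable [MeasurableSpace V] [BorelSpace V] {μ : Measure V}

theorem integrable_divergence [IsFiniteMeasureOnCompacts μ] {W : V → V} (hW : ContDiff ℝ 1 W)
    (hsupp : HasCompactSupport W) : Integrable (divergence W) μ :=
  (continuousOn_univ.1 (continuousOn_divergence isOpen_univ
    hW.contDiffOn)).integrable_of_hasCompactSupport
    ((hsupp.fderiv ℝ).comp_left (g := fun A : V →L[ℝ] V => LinearMap.trace ℝ V A) (map_zero _))

variable [μ.IsAddHaarMeasure]

theorem integral_fderiv_apply_eq_zero {φ : V → ℝ} (hφ : ContDiff ℝ 1 φ)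
    (hsupp : HasCompactSupport φ) (v : V) : ∫ x, fderiv ℝ φ x v ∂μ = 0 := by
  have hint : Integrable (fun x => fderiv ℝ φ x v) μ :=
    ((hφ.continuous_fderiv one_ne_zero).clm_apply continuous_const).integrable_of_hasCompactSupport
      (hsupp.fderiv_apply ℝ v)
  have hparts := integral_mul_fderiv_eq_neg_fderiv_mul_of_integrable (μ := μ) (v := v)
    (f := fun _ : V => (1 : ℝ)) (g := φ) (by simp) (by simpa using hint)
    (by simpa using hφ.continuous.integrable_of_hasCompactSupport hsupp)
    (by simp) fun x _ => hφ.differentiable one_ne_zero x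
  simpa using hparts

theorem integral_divergence_eq_zero {W : V → V} (hW : ContDiff ℝ 1 W)
    (hsupp : HasCompactSupport W) : ∫ x, divergence W x ∂μ = 0 := by
  set e := finBasis ℝ V
  set coord : Fin (finrank ℝ V) → V →L[ℝ] ℝ := fun i => (e.coord i).toContinuousLinearMap
  have hfderiv (i) : (fun x => e.coord i (fderiv ℝ W x (e i))) =
      fun x => fderiv ℝ (coord i ∘ W) x (e i) := by
    funext x
    rw [((coord i).hasFDerivAt.comp x (hW.differentiable one_ne_zero x).hasFDerivAt).fderiv]
    rfl
  have hC1 (i) : ContDiff ℝ 1 (coord i ∘ W) := (coord i).contDiff.comp hW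
  have hsupp' (i) : HasCompactSupport (coord i ∘ W) := hsupp.comp_left (map_zero _)
  have hint (i) : Integrable (fun x => fderiv ℝ (coord i ∘ W) x (e i)) μ :=
    (((hC1 i).continuous_fderiv one_ne_zero).clm_apply
      continuous_const).integrable_of_hasCompactSupport ((hsupp' i).fderiv_apply ℝ _)
  simp only [divergence_eq_sum_coord e]
  rw [integral_finsetSum _ fun i _ => hfderiv i ▸ hint i]
  exact Finset.sum_eq_zero fun i _ =>
    hfderiv i ▸ integral_fderiv_apply_eq_zero (hC1 i) (hsupp' i) _

end Divergence

section Gradient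

variable {H : Type*} [NormedAddCommGroup H] [InnerProductSpace ℝ H] [FiniteDimensional ℝ H]

theorem contDiffAt_gradient {u : H → ℝ} {x : H} {n : WithTop ℕ∞} (hu : ContDiffAt ℝ (n + 1) u x) :
    ContDiffAt ℝ n (∇ u) x :=
  (toDual ℝ H).symm.contDiff.contDiffAt.comp x (hu.fderiv_right le_rfl)

theorem inner_fderiv_gradient (u : H → ℝ) (x v w : H) :
    ⟪fderiv ℝ (∇ u) x v, w⟫ = fderiv ℝ (fderiv ℝ u) x v w := by
  have hcomp : fderiv ℝ (∇ u) x v = (toDual ℝ H).symm (fderiv ℝ (fderiv ℝ u) x v) :=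
    congrArg (· v) ((toDual ℝ H).symm.toContinuousLinearEquiv.comp_fderiv)
  rw [hcomp, toDual_symm_apply]

theorem divergence_gradient (u : H → ℝ) (x : H) :
    divergence (∇ u) x = (Δ u) x := by
  rw [divergence, LinearMap.trace_eq_sum_inner _ (stdOrthonormalBasis ℝ H),
    congrFun (laplacian_eq_iteratedFDeriv_stdOrthonormalBasis u) x]
  refine Finset.sum_congr rfl fun i _ => ?_
  rw [iteratedFDeriv_two_apply, ← real_inner_comm]
  exact inner_fderiv_gradient u x _ _

end Gradient

section Cutoff

theorem deriv_smoothTransition_eq_zero_of_nonpos {t : ℝ} (ht : t ≤ 0) :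
    deriv Real.smoothTransition t = 0 :=
  IsLocalMin.deriv_eq_zero <| Eventually.of_forall fun s => by
    simpa only [Real.smoothTransition.zero_of_nonpos ht] using Real.smoothTransition.nonneg s

theorem deriv_smoothTransition_eq_zero_of_one_le {t : ℝ} (ht : 1 ≤ t) :
    deriv Real.smoothTransition t = 0 :=
  IsLocalMax.deriv_eq_zero <| Eventually.of_forall fun s => by
    simpa only [Real.smoothTransition.one_of_one_le ht] using Real.smoothTransition.le_one s

theorem hasDerivAt_smoothTransition (t : ℝ) :
    HasDerivAt Real.smoothTransition (deriv Real.smoothTransition t) t :=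
  (Real.smoothTransition.contDiff.differentiable one_ne_zero t).hasDerivAt

theorem exists_abs_deriv_smoothTransition_le :
    ∃ C, 0 ≤ C ∧ ∀ t, |deriv Real.smoothTransition t| ≤ C := by
  have hcont : Continuous (deriv Real.smoothTransition) :=
    Real.smoothTransition.contDiff.continuous_deriv le_rfl
  have hsupp : HasCompactSupport (deriv Real.smoothTransition) := by
    refine HasCompactSupport.intro (isCompact_Icc (a := (0 : ℝ)) (b := 1)) fun t ht => ?_
    rcases not_and_or.1 ht with h | h
    · exact deriv_smoothTransition_eq_zero_of_nonpos (not_le.1 h).le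
    · exact deriv_smoothTransition_eq_zero_of_one_le (not_le.1 h).le
  obtain ⟨C, hC⟩ := hcont.bounded_above_of_compact_support hsupp
  exact ⟨C, (norm_nonneg _).trans (hC 0), hC⟩

section Level

/-- A cutoff to the part of `{0 < g}` away from its boundary: it is `0` where `g ≤ ε` and `1` where
`2 * ε ≤ g`. -/
def levelCutoff {X : Type*} (g : X → ℝ) (ε : ℝ) (x : X) : ℝ :=
  Real.smoothTransition (g x / ε - 1)

theorem norm_levelCutoff_le_one {X : Type*} (g : X → ℝ) (ε : ℝ) (x : X) :
    ‖levelCutoff g ε x‖ ≤ 1 := by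
  rw [levelCutoff, Real.norm_of_nonneg (Real.smoothTransition.nonneg _)]
  exact Real.smoothTransition.le_one _

theorem levelCutoff_eventuallyEq_zero {X : Type*} [TopologicalSpace X] {g : X → ℝ}
    (hg : Continuous g) {ε : ℝ} (hε : 0 < ε) {x : X} (hx : g x < ε) :
    levelCutoff g ε =ᶠ[𝓝 x] 0 := by
  filter_upwards [hg.continuousAt.eventually_lt_const hx] with y hy
  exact Real.smoothTransition.zero_of_nonpos (sub_nonpos.2 ((div_le_one hε).2 hy.le))

theorem tendsto_levelCutoff {X : Type*} {g : X → ℝ} {x : X} (hx : 0 < g x) :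
    Tendsto (fun ε => levelCutoff g ε x) (𝓝[>] 0) (𝓝 1) := by
  refine tendsto_const_nhds.congr' ?_
  have hsmall : ∀ᶠ ε in 𝓝[>] (0 : ℝ), ε < g x / 2 :=
    eventually_nhdsWithin_of_eventually_nhds (eventually_lt_nhds (by positivity))
  filter_upwards [hsmall, self_mem_nhdsWithin] with ε hε hpos
  have hquot : 2 ≤ g x / ε := (le_div_iff₀ hpos).2 (by linarith)
  exact (Real.smoothTransition.one_of_one_le (by linarith)).symm

variable {V : Type*} [NormedAddCommGroup V] [NormedSpace ℝ V] {g : V → ℝ}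

theorem contDiff_levelCutoff {n : ℕ∞} (hg : ContDiff ℝ n g) (ε : ℝ) :
    ContDiff ℝ n (levelCutoff g ε) :=
  Real.smoothTransition.contDiff.comp ((hg.div_const ε).sub contDiff_const)

theorem fderiv_levelCutoff {x : V} (hg : DifferentiableAt ℝ g x) (ε : ℝ) (v : V) :
    fderiv ℝ (levelCutoff g ε) x v =
      deriv Real.smoothTransition (g x / ε - 1) * (fderiv ℝ g x v / ε) := by
  have hinner : HasFDerivAt (fun y => g y / ε - 1) (ε⁻¹ • fderiv ℝ g x) x := by
    simpa only [div_eq_mul_inv, mul_comm _ ε⁻¹] using (hg.hasFDerivAt.const_mul ε⁻¹).sub_const 1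
  have hcomp : HasFDerivAt (levelCutoff g ε) _ x :=
    (hasDerivAt_smoothTransition _).comp_hasFDerivAt x hinner
  rw [hcomp.fderiv, div_eq_inv_mul (fderiv ℝ g x v)]
  rfl

end Level

section Radial

variable {H : Type*} [NormedAddCommGroup H]

/-- A smooth cutoff, equal to `1` on the ball of radius `R` and to `0` off the ball of radius
`√2 * R`. -/
def radialCutoff (R : ℝ) (x : H) : ℝ :=
  Real.smoothTransition (2 - ‖x‖ ^ 2 / R ^ 2)

theorem radialCutoff_nonneg (R : ℝ) (x : H) : 0 ≤ radialCutoff R x :=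
  Real.smoothTransition.nonneg _

theorem radialCutoff_le_one (R : ℝ) (x : H) : radialCutoff R x ≤ 1 :=
  Real.smoothTransition.le_one _

theorem radialCutoff_eq_one {R : ℝ} (hR : 0 < R) {x : H} (hx : ‖x‖ ≤ R) :
    radialCutoff R x = 1 := by
  have hratio : ‖x‖ ^ 2 / R ^ 2 ≤ 1 :=
    (div_le_one (by positivity)).2 (pow_le_pow_left₀ (norm_nonneg x) hx 2)
  exact Real.smoothTransition.one_of_one_le (by linarith)

theorem radialCutoff_eq_zero {R : ℝ} (hR : 0 < R) {x : H} (hx : 2 * R < ‖x‖) :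
    radialCutoff R x = 0 := by
  have hratio : 2 ≤ ‖x‖ ^ 2 / R ^ 2 := (le_div_iff₀ (by positivity)).2 (by nlinarith)
  exact Real.smoothTransition.zero_of_nonpos (by linarith)

variable [InnerProductSpace ℝ H]

theorem contDiff_radialCutoff (R : ℝ) {n : ℕ∞} : ContDiff ℝ n (radialCutoff R : H → ℝ) :=
  Real.smoothTransition.contDiff.comp (contDiff_const.sub ((contDiff_norm_sq ℝ).div_const _))

theorem fderiv_radialCutoff (R : ℝ) (x v : H) :
    fderiv ℝ (radialCutoff R) x v =
      -(deriv Real.smoothTransition (2 - ‖x‖ ^ 2 / R ^ 2) * (2 * ⟪x, v⟫ / R ^ 2)) := by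
  have hinner : HasFDerivAt (fun y : H => 2 - ‖y‖ ^ 2 / R ^ 2)
      (-((R ^ 2)⁻¹ • (2 • innerSL ℝ x))) x := by
    simpa only [div_eq_mul_inv, mul_comm _ (R ^ 2)⁻¹] using
      ((hasStrictFDerivAt_norm_sq x).hasFDerivAt.const_mul (R ^ 2)⁻¹).const_sub 2
  have hcomp : HasFDerivAt (radialCutoff R) _ x :=
    (hasDerivAt_smoothTransition _).comp_hasFDerivAt x hinner
  rw [hcomp.fderiv]
  change _ * -((R ^ 2)⁻¹ * (2 • ⟪x, v⟫)) = _
  rw [nsmul_eq_mul, Nat.cast_ofNat]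
  ring

theorem fderiv_radialCutoff_eq_zero {R : ℝ} (hR : 0 < R) {x : H} (hx : ‖x‖ ≤ R) :
    fderiv ℝ (radialCutoff R) x = 0 :=
  IsLocalMax.fderiv_eq_zero <| Eventually.of_forall fun y => by
    simpa only [radialCutoff_eq_one hR hx] using radialCutoff_le_one R y

theorem exists_norm_fderiv_radialCutoff_le :
    ∃ C, ∀ R, 1 ≤ R → ∀ x : H, ‖fderiv ℝ (radialCutoff R) x‖ ≤ C / (1 + ‖x‖) := by
  obtain ⟨C, hC0, hC⟩ := exists_abs_deriv_smoothTransition_le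
  refine ⟨8 * C, fun R hR x => ?_⟩
  refine ContinuousLinearMap.opNorm_le_bound _ (by positivity) fun v => ?_
  rw [fderiv_radialCutoff, norm_neg, norm_mul, Real.norm_eq_abs]
  rcases le_or_gt (2 * R ^ 2) (‖x‖ ^ 2) with hx | hx
  · have hratio : 2 ≤ ‖x‖ ^ 2 / R ^ 2 := (le_div_iff₀ (by positivity)).2 hx
    rw [deriv_smoothTransition_eq_zero_of_nonpos (by linarith), abs_zero, zero_mul]
    positivity
  · have hinner : ‖2 * ⟪x, v⟫ / R ^ 2‖ ≤ 2 * (‖x‖ * ‖v‖) / R ^ 2 := by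
      rw [norm_div, norm_mul, Real.norm_two, Real.norm_of_nonneg (sq_nonneg R)]
      gcongr
      exact norm_inner_le_norm x v
    have hfactor : 2 * ‖x‖ / R ^ 2 ≤ 8 / (1 + ‖x‖) := by
      rw [div_le_div_iff₀ (by positivity) (by positivity)]
      nlinarith [sq_nonneg (‖x‖ - 1)]
    calc |deriv Real.smoothTransition (2 - ‖x‖ ^ 2 / R ^ 2)| * ‖2 * ⟪x, v⟫ / R ^ 2‖
        ≤ C * (2 * (‖x‖ * ‖v‖) / R ^ 2) := by gcongr; exact hC _
      _ = C * (2 * ‖x‖ / R ^ 2) * ‖v‖ := by ring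
      _ ≤ C * (8 / (1 + ‖x‖)) * ‖v‖ := by gcongr
      _ = 8 * C / (1 + ‖x‖) * ‖v‖ := by ring

end Radial

end Cutoff

section Truncation

variable {H : Type*} [NormedAddCommGroup H] [InnerProductSpace ℝ H] [FiniteDimensional ℝ H]

theorem exists_norm_divergence_radialCutoff_smul_le :
    ∃ C, ∀ R, 1 ≤ R → ∀ (W : H → H) (x : H), DifferentiableAt ℝ W x →
      ‖divergence (fun y => radialCutoff R y • W y) x‖ ≤
        ‖divergence W x‖ + C * (‖W x‖ / (1 + ‖x‖)) := by
  obtain ⟨C, hC⟩ := exists_norm_fderiv_radialCutoff_le (H := H)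
  refine ⟨C, fun R hR W x hW => ?_⟩
  rw [divergence_smul ((contDiff_radialCutoff (n := 1) R).differentiable one_ne_zero x) hW]
  refine (norm_add_le _ _).trans (add_le_add ?_ ?_)
  · rw [norm_mul, Real.norm_of_nonneg (radialCutoff_nonneg R x)]
    exact mul_le_of_le_one_left (norm_nonneg _) (radialCutoff_le_one R x)
  · exact (ContinuousLinearMap.le_of_opNorm_le _ (hC R hR x) _).trans_eq (by ring)

variable [MeasurableSpace H] [BorelSpace H] {μ : Measure H} {Ω : Set H} {W : H → H}

theorem eventually_integrableOn_divergence_radialCutoff_smul (hΩ : IsOpen Ω)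
    (hW : ContDiffOn ℝ 1 W Ω) (hint : IntegrableOn (divergence W) Ω μ)
    (hgrowth : IntegrableOn (fun x => ‖W x‖ / (1 + ‖x‖)) Ω μ) :
    ∀ᶠ R in atTop, IntegrableOn (divergence fun y => radialCutoff R y • W y) Ω μ := by
  obtain ⟨C, hC⟩ := exists_norm_divergence_radialCutoff_smul_le (H := H)
  filter_upwards [eventually_ge_atTop 1] with R hR
  refine (hint.norm.add (hgrowth.const_mul C)).mono'
    ((continuousOn_divergence hΩ ((contDiff_radialCutoff R).contDiffOn.smul
      hW)).aestronglyMeasurable hΩ.measurableSet) ?_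
  filter_upwards [ae_restrict_mem hΩ.measurableSet] with x hx
  exact hC R hR W x ((hW.contDiffAt (hΩ.mem_nhds hx)).differentiableAt one_ne_zero)

theorem tendsto_setIntegral_divergence_radialCutoff_smul (hΩ : IsOpen Ω)
    (hW : ContDiffOn ℝ 1 W Ω) (hint : IntegrableOn (divergence W) Ω μ)
    (hgrowth : IntegrableOn (fun x => ‖W x‖ / (1 + ‖x‖)) Ω μ) :
    Tendsto (fun R => ∫ x in Ω, divergence (fun y => radialCutoff R y • W y) x ∂μ) atTop
      (𝓝 (∫ x in Ω, divergence W x ∂μ)) := by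
  obtain ⟨C, hC⟩ := exists_norm_divergence_radialCutoff_smul_le (H := H)
  have hdiff : ∀ x ∈ Ω, DifferentiableAt ℝ W x := fun x hx =>
    (hW.contDiffAt (hΩ.mem_nhds hx)).differentiableAt one_ne_zero
  refine tendsto_integral_filter_of_dominated_convergence
    (fun x => ‖divergence W x‖ + C * (‖W x‖ / (1 + ‖x‖))) ?_ ?_
    (hint.norm.add (hgrowth.const_mul C)) ?_
  · filter_upwards [eventually_integrableOn_divergence_radialCutoff_smul hΩ hW hint hgrowth]
      with R hR using hR.aestronglyMeasurable
  · filter_upwards [eventually_ge_atTop 1] with R hR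
    filter_upwards [ae_restrict_mem hΩ.measurableSet] with x hx using hC R hR W x (hdiff x hx)
  · filter_upwards [ae_restrict_mem hΩ.measurableSet] with x hx
    refine tendsto_const_nhds.congr' ?_
    filter_upwards [eventually_ge_atTop ‖x‖, eventually_gt_atTop 0] with R hxR hR
    rw [divergence_smul ((contDiff_radialCutoff (n := 1) R).differentiable one_ne_zero x)
      (hdiff x hx), radialCutoff_eq_one hR hxR, fderiv_radialCutoff_eq_zero hR hxR]
    simp

end Truncation

section DivergenceInequality

variable {H : Type*} [NormedAddCommGroup H] [InnerProductSpace ℝ H] [FiniteDimensional ℝ H]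

/-- `g` is a `C²` defining function of the open set `Ω`: `g` is positive exactly on `Ω` and its
gradient, the inward normal direction, does not vanish on the zero set of `g`. -/
structure IsDefiningFunction (g : H → ℝ) (Ω : Set H) : Prop where
  contDiff : ContDiff ℝ 2 g
  mem_iff : ∀ x, x ∈ Ω ↔ 0 < g x
  gradient_ne_zero : ∀ x, g x = 0 → ∇ g x ≠ 0

namespace IsDefiningFunction

variable {g : H → ℝ} {Ω : Set H} {W : H → H}

theorem differentiable (h : IsDefiningFunction g Ω) : Differentiable ℝ g :=
  h.contDiff.differentiable two_ne_zero

theorem contDiff_gradient (h : IsDefiningFunction g Ω) : ContDiff ℝ 1 (∇ g) :=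
  contDiff_iff_contDiffAt.2 fun _ => contDiffAt_gradient (n := 1) h.contDiff.contDiffAt

theorem isOpen (h : IsDefiningFunction g Ω) : IsOpen Ω := by
  rw [Set.ext h.mem_iff]
  exact isOpen_lt continuous_const h.contDiff.continuous

theorem mem_closure_iff (h : IsDefiningFunction g Ω) (x : H) : x ∈ closure Ω ↔ 0 ≤ g x := by
  refine ⟨fun hx => ?_, fun hx => ?_⟩
  · rw [Set.ext h.mem_iff] at hx
    exact closure_lt_subset_le continuous_const h.contDiff.continuous hx
  rcases hx.lt_or_eq with hpos | hzero
  · exact subset_closure ((h.mem_iff x).2 hpos)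
  by_contra hcl
  have hmax : IsLocalMax g x := by
    filter_upwards [isClosed_closure.isOpen_compl.mem_nhds hcl] with y hy
    rw [← hzero]
    exact not_lt.1 fun hy' => hy (subset_closure ((h.mem_iff y).2 hy'))
  exact h.gradient_ne_zero x hzero.symm (by simp [gradient, hmax.fderiv_eq_zero])

theorem mem_frontier_iff (h : IsDefiningFunction g Ω) (x : H) : x ∈ frontier Ω ↔ g x = 0 := by
  rw [h.isOpen.frontier_eq, Set.mem_sdiff, h.mem_closure_iff, h.mem_iff, not_lt]
  exact ⟨fun hx => le_antisymm hx.2 hx.1, fun hx => ⟨hx.ge, hx.le⟩⟩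

theorem exists_forall_lt_imp_inner_lt (h : IsDefiningFunction g Ω) (hW : ContinuousOn W (closure Ω))
    (hout : ∀ x ∈ frontier Ω, ⟪∇ g x, W x⟫ ≤ 0) {K : Set H} (hK : IsCompact K) {δ : ℝ}
    (hδ : 0 < δ) :
    ∃ e, 0 < e ∧ ∀ x ∈ Ω, x ∈ K → g x < e → ⟪∇ g x, W x⟫ < δ * ‖∇ g x‖ ^ 2 := by
  set A : Set H :=
    (K ∩ closure Ω) ∩ (fun x => ⟪∇ g x, W x⟫ - δ * ‖∇ g x‖ ^ 2) ⁻¹' Ici 0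
  have hK' : IsCompact (K ∩ closure Ω) := hK.inter_right isClosed_closure
  have hgrad : Continuous (∇ g) := h.contDiff_gradient.continuous
  have hcont : ContinuousOn (fun x => ⟪∇ g x, W x⟫ - δ * ‖∇ g x‖ ^ 2) (K ∩ closure Ω) :=
    (hgrad.continuousOn.inner (hW.mono inter_subset_right)).sub (by fun_prop)
  have hA_compact : IsCompact A :=
    hK'.of_isClosed_subset (hcont.preimage_isClosed_of_isClosed hK'.isClosed isClosed_Ici)
      inter_subset_left
  have hA_pos : ∀ x ∈ A, 0 < g x := by
    rintro x ⟨⟨-, hx⟩, hx'⟩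
    refine ((h.mem_closure_iff x).1 hx).lt_of_ne' fun hzero => ?_
    have hnormal : 0 < ‖∇ g x‖ := norm_pos_iff.2 (h.gradient_ne_zero x hzero)
    have hpos : 0 < δ * ‖∇ g x‖ ^ 2 := by positivity
    linarith [sub_nonneg.1 (mem_Ici.1 (mem_preimage.1 hx')),
      hout x ((h.mem_frontier_iff x).2 hzero)]
  obtain ⟨e, he, heA⟩ :=
    hA_compact.exists_forall_le' h.contDiff.continuous.continuousOn hA_pos
  refine ⟨e, he, fun x hx hxK hgx => ?_⟩
  by_contra hlt
  exact (heA x ⟨⟨hxK, subset_closure hx⟩, sub_nonneg.2 (not_lt.1 hlt)⟩).not_gt hgx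

theorem exists_inward_field (h : IsDefiningFunction g Ω) {K : Set H} (hK : IsCompact K) :
    ∃ Z : H → H, ContDiff ℝ 1 Z ∧ HasCompactSupport Z ∧ (∀ x ∈ K, Z x = ∇ g x) ∧
      ∀ x, 0 ≤ ⟪∇ g x, Z x⟫ := by
  obtain ⟨R, hR, hKR⟩ := hK.isBounded.exists_pos_norm_le
  refine ⟨fun x => radialCutoff R x • ∇ g x, (contDiff_radialCutoff R).smul h.contDiff_gradient,
    HasCompactSupport.intro (isCompact_closedBall 0 (2 * R)) fun x hx => ?_, fun x hx => ?_,
    fun x => ?_⟩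
  · rw [mem_closedBall_zero_iff, not_le] at hx
    rw [radialCutoff_eq_zero hR hx, zero_smul]
  · simp [radialCutoff_eq_one hR (hKR x hx)]
  · rw [inner_smul_right, real_inner_self_eq_norm_sq]
    exact mul_nonneg (radialCutoff_nonneg R x) (sq_nonneg _)

variable [MeasurableSpace H] [BorelSpace H] {μ : Measure H} [μ.IsAddHaarMeasure]

theorem setIntegral_levelCutoff_mul_divergence_nonneg (h : IsDefiningFunction g Ω)
    (hW : ContDiffOn ℝ 1 W Ω) {K : Set H} (hK : IsCompact K) (hWK : ∀ x ∈ Ω, x ∉ K → W x = 0)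
    {ε : ℝ} (hε : 0 < ε) (hout : ∀ x ∈ Ω, g x < 2 * ε → ⟪∇ g x, W x⟫ ≤ 0)
    (hint : IntegrableOn (divergence W) Ω μ) :
    0 ≤ ∫ x in Ω, levelCutoff g ε x * divergence W x ∂μ := by
  set Z : H → H := fun x => levelCutoff g ε x • W x
  have hζ : ContDiff ℝ 1 (levelCutoff g ε) := contDiff_levelCutoff (h.contDiff.of_le one_le_two) ε
  have hZ_near {x : H} (hx : x ∉ Ω) : Z =ᶠ[𝓝 x] 0 := by
    have hgx : g x < ε := (not_lt.1 (mt (h.mem_iff x).2 hx)).trans_lt hε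
    filter_upwards [levelCutoff_eventuallyEq_zero h.contDiff.continuous hε hgx] with y hy
    simp [Z, hy]
  have hZ_contDiff : ContDiff ℝ 1 Z := contDiff_iff_contDiffAt.2 fun x => by
    by_cases hx : x ∈ Ω
    · exact hζ.contDiffAt.smul (hW.contDiffAt (h.isOpen.mem_nhds hx))
    · exact contDiffAt_const.congr_of_eventuallyEq (hZ_near hx)
  have hZ_supp : HasCompactSupport Z := HasCompactSupport.intro hK fun x hxK => by
    by_cases hx : x ∈ Ω
    · simp [Z, hWK x hx hxK]
    · exact (hZ_near hx).self_of_nhds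
  have hdiv_le : ∀ x ∈ Ω, divergence Z x ≤ levelCutoff g ε x * divergence W x := fun x hx => by
    rw [divergence_smul (hζ.differentiable one_ne_zero x)
      ((hW.contDiffAt (h.isOpen.mem_nhds hx)).differentiableAt one_ne_zero),
      fderiv_levelCutoff (h.differentiable x), ← inner_gradient_left]
    refine add_le_of_nonpos_right ?_
    rcases lt_or_ge (g x) (2 * ε) with hgx | hgx
    · exact mul_nonpos_of_nonneg_of_nonpos Real.smoothTransition.monotone.deriv_nonneg
        (div_nonpos_of_nonpos_of_nonneg (hout x hx hgx) hε.le)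
    · have hquot : 2 ≤ g x / ε := (le_div_iff₀ hε).2 hgx
      rw [deriv_smoothTransition_eq_zero_of_one_le (by linarith), zero_mul]
  have hint_Z : Integrable (divergence Z) μ := integrable_divergence hZ_contDiff hZ_supp
  have hint_mul : IntegrableOn (fun x => levelCutoff g ε x * divergence W x) Ω μ :=
    hint.bdd_mul hζ.continuous.aestronglyMeasurable
      (ae_of_all _ (norm_levelCutoff_le_one g ε))
  calc (0 : ℝ) = ∫ x, divergence Z x ∂μ := (integral_divergence_eq_zero hZ_contDiff hZ_supp).symm
    _ = ∫ x in Ω, divergence Z x ∂μ := (setIntegral_eq_integral_of_forall_compl_eq_zero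
      fun x hx => divergence_eq_zero_of_eventuallyEq (hZ_near hx)).symm
    _ ≤ ∫ x in Ω, levelCutoff g ε x * divergence W x ∂μ :=
      setIntegral_mono_on hint_Z.integrableOn hint_mul h.isOpen.measurableSet hdiv_le

theorem setIntegral_divergence_nonneg_of_near (h : IsDefiningFunction g Ω)
    (hW : ContDiffOn ℝ 1 W Ω) {K : Set H} (hK : IsCompact K) (hWK : ∀ x ∈ Ω, x ∉ K → W x = 0)
    {e : ℝ} (he : 0 < e) (hout : ∀ x ∈ Ω, g x < e → ⟪∇ g x, W x⟫ ≤ 0)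
    (hint : IntegrableOn (divergence W) Ω μ) :
    0 ≤ ∫ x in Ω, divergence W x ∂μ := by
  have hlim : Tendsto (fun ε => ∫ x in Ω, levelCutoff g ε x * divergence W x ∂μ) (𝓝[>] 0)
      (𝓝 (∫ x in Ω, divergence W x ∂μ)) := by
    refine tendsto_integral_filter_of_dominated_convergence (fun x => ‖divergence W x‖)
      (Eventually.of_forall fun ε => ?_) (Eventually.of_forall fun ε => ae_of_all _ fun x => ?_)
      hint.norm ?_
    · exact (contDiff_levelCutoff h.contDiff ε).continuous.aestronglyMeasurable.mul
        hint.aestronglyMeasurable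
    · rw [norm_mul]
      exact mul_le_of_le_one_left (norm_nonneg _) (norm_levelCutoff_le_one g ε x)
    · filter_upwards [ae_restrict_mem h.isOpen.measurableSet] with x hx
      simpa using (tendsto_levelCutoff ((h.mem_iff x).1 hx)).mul_const (divergence W x)
  refine ge_of_tendsto hlim ?_
  have hsmall : ∀ᶠ ε in 𝓝[>] (0 : ℝ), ε < e / 2 :=
    eventually_nhdsWithin_of_eventually_nhds (eventually_lt_nhds (by positivity))
  filter_upwards [hsmall, self_mem_nhdsWithin] with ε hε hpos
  exact h.setIntegral_levelCutoff_mul_divergence_nonneg hW hK hWK hpos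
    (fun x hx hgx => hout x hx (by linarith)) hint

theorem setIntegral_divergence_sub_nonneg (h : IsDefiningFunction g Ω)
    (hW : ContDiffOn ℝ 1 W Ω) (hW' : ContinuousOn W (closure Ω)) {K : Set H} (hK : IsCompact K)
    (hWK : ∀ x ∈ Ω, x ∉ K → W x = 0) (hout : ∀ x ∈ frontier Ω, ⟪∇ g x, W x⟫ ≤ 0)
    (hint : IntegrableOn (divergence W) Ω μ) {Z : H → H} (hZ : ContDiff ℝ 1 Z)
    (hZ_supp : HasCompactSupport Z) (hZK : ∀ x ∈ K, Z x = ∇ g x) (hZ_in : ∀ x, 0 ≤ ⟪∇ g x, Z x⟫)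
    {δ : ℝ} (hδ : 0 < δ) :
    0 ≤ ∫ x in Ω, divergence W x ∂μ - δ * ∫ x in Ω, divergence Z x ∂μ := by
  obtain ⟨e, he, hlt⟩ := h.exists_forall_lt_imp_inner_lt hW' hout hK hδ
  have hZ_int : IntegrableOn (fun x => δ * divergence Z x) Ω μ :=
    (integrable_divergence hZ hZ_supp).integrableOn.const_mul δ
  have hdiv : ∀ x ∈ Ω,
      divergence (fun y => W y - δ • Z y) x = divergence W x - δ * divergence Z x :=
    fun x hx => by
      have hZx := hZ.differentiable one_ne_zero x
      rw [divergence_sub ((hW.contDiffAt (h.isOpen.mem_nhds hx)).differentiableAt one_ne_zero)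
        (hZx.fun_const_smul δ), divergence_const_smul hZx]
  rw [← integral_const_mul, ← integral_sub hint hZ_int,
    ← setIntegral_congr_fun h.isOpen.measurableSet hdiv]
  refine h.setIntegral_divergence_nonneg_of_near (hW.sub (hZ.const_smul δ).contDiffOn)
    (hK.union hZ_supp.isCompact) (fun x hx hxK => ?_) he (fun x hx hgx => ?_)
    (IntegrableOn.congr_fun (hint.sub hZ_int) (fun x hx => (hdiv x hx).symm)
      h.isOpen.measurableSet)
  · rw [mem_union, not_or] at hxK
    rw [hWK x hx hxK.1, image_eq_zero_of_notMem_tsupport hxK.2, smul_zero, sub_zero]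
  · rw [inner_sub_right, inner_smul_right]
    by_cases hxK : x ∈ K
    · rw [hZK x hxK, real_inner_self_eq_norm_sq]
      exact (sub_neg.2 (hlt x hx hxK hgx)).le
    · rw [hWK x hx hxK, inner_zero_right, zero_sub, neg_nonpos]
      exact mul_nonneg hδ.le (hZ_in x)

/-- Subtracting a small multiple of an inward field makes `W` point outward in a whole neighbourhood
of the boundary, where the cutoffs to the interior of `Ω` can be used. -/
theorem setIntegral_divergence_nonneg_of_compact (h : IsDefiningFunction g Ω)
    (hW : ContDiffOn ℝ 1 W Ω) (hW' : ContinuousOn W (closure Ω)) {K : Set H} (hK : IsCompact K)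
    (hWK : ∀ x ∈ Ω, x ∉ K → W x = 0) (hout : ∀ x ∈ frontier Ω, ⟪∇ g x, W x⟫ ≤ 0)
    (hint : IntegrableOn (divergence W) Ω μ) :
    0 ≤ ∫ x in Ω, divergence W x ∂μ := by
  obtain ⟨Z, hZ, hZ_supp, hZK, hZ_in⟩ := h.exists_inward_field hK
  set I := ∫ x in Ω, divergence W x ∂μ
  set J := ∫ x in Ω, divergence Z x ∂μ
  have hlim : Tendsto (fun δ => I - δ * J) (𝓝[>] 0) (𝓝 I) := by
    have hcont : Continuous fun δ : ℝ => I - δ * J := by fun_prop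
    simpa using (hcont.tendsto 0).mono_left nhdsWithin_le_nhds
  exact ge_of_tendsto hlim <| eventually_nhdsWithin_of_forall fun δ hδ =>
    h.setIntegral_divergence_sub_nonneg hW hW' hK hWK hout hint hZ hZ_supp hZK hZ_in hδ

theorem setIntegral_divergence_nonneg (h : IsDefiningFunction g Ω)
    (hW : ContDiffOn ℝ 1 W Ω) (hW' : ContinuousOn W (closure Ω))
    (hout : ∀ x ∈ frontier Ω, ⟪∇ g x, W x⟫ ≤ 0) (hint : IntegrableOn (divergence W) Ω μ)
    (hgrowth : IntegrableOn (fun x => ‖W x‖ / (1 + ‖x‖)) Ω μ) :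
    0 ≤ ∫ x in Ω, divergence W x ∂μ := by
  refine ge_of_tendsto
    (tendsto_setIntegral_divergence_radialCutoff_smul h.isOpen hW hint hgrowth) ?_
  filter_upwards [eventually_integrableOn_divergence_radialCutoff_smul h.isOpen hW hint hgrowth,
    eventually_gt_atTop 0] with R hint_R hR
  refine h.setIntegral_divergence_nonneg_of_compact
    ((contDiff_radialCutoff R).contDiffOn.smul hW)
    ((contDiff_radialCutoff (n := 1) R).continuous.continuousOn.smul hW')
    (isCompact_closedBall (0 : H) (2 * R)) (fun x _ hxR => ?_) (fun x hx => ?_) hint_R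
  · rw [mem_closedBall_zero_iff, not_le] at hxR
    simp [radialCutoff_eq_zero hR hxR]
  · rw [inner_smul_right]
    exact mul_nonpos_of_nonneg_of_nonpos (radialCutoff_nonneg R x) (hout x hx)

end IsDefiningFunction

end DivergenceInequality

section LevelSet

theorem fderiv_apply_eq_zero_of_const_on_level {V F G : Type*}
    [NormedAddCommGroup V] [NormedSpace ℝ V] [CompleteSpace V]
    [NormedAddCommGroup F] [NormedSpace ℝ F] [FiniteDimensional ℝ F]
    [NormedAddCommGroup G] [NormedSpace ℝ G]
    {g : V → F} {g' : V →L[ℝ] F} {u : V → G} {x : V} (hg : HasStrictFDerivAt g g' x)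
    (hg' : g'.range = ⊤) (hu : ∀ y, g y = g x → u y = u x) {v : V} (hv : g' v = 0) :
    fderiv ℝ u x v = 0 := by
  by_cases hdiff : DifferentiableAt ℝ u x
  swap
  · rw [fderiv_zero_of_not_differentiableAt hdiff, zero_apply]
  set φ : g'.ker → V := hg.implicitFunction g g' hg' (g x)
  have hφ0 : φ 0 = x := hg.implicitFunction_apply_image hg'
  have hφ : HasFDerivAt φ g'.ker.subtypeL 0 := (hg.to_implicitFunction hg').hasFDerivAt
  have hlevel : ∀ᶠ k in 𝓝 (0 : g'.ker), g (φ k) = g x :=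
    ((Continuous.prodMk_right (g x)).tendsto 0).eventually (hg.map_implicitFunction_eq hg')
  have hconst : u ∘ φ =ᶠ[𝓝 0] fun _ => u x := hlevel.mono fun k hk => hu _ hk
  have hcomp : HasFDerivAt (u ∘ φ) ((fderiv ℝ u x).comp g'.ker.subtypeL) 0 :=
    HasFDerivAt.comp 0 (hφ0.symm ▸ hdiff.hasFDerivAt) hφ
  have hzero := hcomp.unique ((hasFDerivAt_const (u x) 0).congr_of_eventuallyEq hconst)
  exact DFunLike.congr_fun hzero ⟨v, hv⟩

theorem exists_gradient_eq_smul_of_const_on_level {H : Type*} [NormedAddCommGroup H]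
    [InnerProductSpace ℝ H] [CompleteSpace H] {g u : H → ℝ} {x : H} (hg : ContDiffAt ℝ 1 g x)
    (hg' : ∇ g x ≠ 0) (hu : ∀ y, g y = g x → u y = u x) : ∃ c : ℝ, ∇ u x = c • ∇ g x := by
  have hsurj : (fderiv ℝ g x).range = ⊤ := by
    refine LinearMap.range_eq_top.2 (LinearMap.surjective fun hzero => hg' ?_)
    have hfderiv : fderiv ℝ g x = 0 := ContinuousLinearMap.coe_inj.1 hzero
    rw [gradient, hfderiv, map_zero]
  have hperp : ∇ u x ∈ (ℝ ∙ ∇ g x)ᗮᗮ := fun v hv => by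
    rw [Submodule.mem_orthogonal_singleton_iff_inner_right, inner_gradient_left] at hv
    rw [real_inner_comm, inner_gradient_left]
    exact fderiv_apply_eq_zero_of_const_on_level (hg.hasStrictFDerivAt one_ne_zero) hsurj hu hv
  rw [Submodule.orthogonal_orthogonal] at hperp
  obtain ⟨c, hc⟩ := Submodule.mem_span_singleton.1 hperp
  exact ⟨c, hc.symm⟩

end LevelSet

section PohozaevField

variable {H : Type*} [NormedAddCommGroup H] [InnerProductSpace ℝ H] [FiniteDimensional ℝ H]

/-- The Pohozaev vector field of `u` with multiplier `X`, where `F` is a primitive of the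
nonlinearity. For `X = id` and `c = 0` it gives the classical Pohozaev identity, and `c` weights the
additional multiplier `u`. -/
def pohozaevField (X : H → H) (u : H → ℝ) (F : ℝ → ℝ) (c : ℝ) (x : H) : H :=
  (⟪X x, ∇ u x⟫ + c * u x) • ∇ u x - (‖∇ u x‖ ^ 2 / 2 - F (u x)) • X x

/-- The divergence of `pohozaevField X u F c` when `u` solves `-Δu = f(u)` and `F' = f`; it
involves only first derivatives of `u`. -/
def pohozaevDensity (X : H → H) (u : H → ℝ) (f F : ℝ → ℝ) (c : ℝ) (x : H) : ℝ :=
  ⟪fderiv ℝ X x (∇ u x), ∇ u x⟫ - divergence X x * (‖∇ u x‖ ^ 2 / 2 - F (u x)) +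
    c * (‖∇ u x‖ ^ 2 - u x * f (u x))

variable {X : H → H} {u g : H → ℝ} {f F : ℝ → ℝ} {x : H}

/-- Both `fderiv ℝ (∇ u) x (∇ u x)` and `fderiv ℝ (∇ u) x (X x)` appear, and cancel because the
Hessian is symmetric. -/
theorem divergence_pohozaevField (hX : DifferentiableAt ℝ X x) (hu : ContDiffAt ℝ 2 u x)
    (hF : HasDerivAt F (f (u x)) (u x)) (heq : -(Δ u) x = f (u x)) (c : ℝ) :
    divergence (pohozaevField X u F c) x = pohozaevDensity X u f F c x := by
  have hu' : HasFDerivAt u (fderiv ℝ u x) x := (hu.differentiableAt two_ne_zero).hasFDerivAt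
  have hgrad : HasFDerivAt (∇ u) (fderiv ℝ (∇ u) x) x :=
    ((contDiffAt_gradient (n := 1) hu).differentiableAt one_ne_zero).hasFDerivAt
  have hφ : HasFDerivAt (fun y => ⟪X y, ∇ u y⟫ + c * u y) _ x :=
    (hX.hasFDerivAt.inner ℝ hgrad).add (hu'.const_mul c)
  have hψ : HasFDerivAt (fun y => ‖∇ u y‖ ^ 2 / 2 - F (u y)) _ x :=
    (hgrad.norm_sq.mul_const (2⁻¹ : ℝ)).sub (hF.comp_hasFDerivAt x hu')
  have hsymm : ⟪X x, fderiv ℝ (∇ u) x (∇ u x)⟫ = ⟪fderiv ℝ (∇ u) x (X x), ∇ u x⟫ := by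
    rw [real_inner_comm, inner_fderiv_gradient, inner_fderiv_gradient]
    exact hu.isSymmSndFDerivAt (by simp) _ _
  refine (divergence_sub (hφ.differentiableAt.fun_smul hgrad.differentiableAt)
    (hψ.differentiableAt.fun_smul hX)).trans ?_
  rw [divergence_smul hφ.differentiableAt hgrad.differentiableAt,
    divergence_smul hψ.differentiableAt hX, divergence_gradient, hφ.fderiv, hψ.fderiv,
    pohozaevDensity, ← heq]
  simp only [add_apply, sub_apply, smul_apply, ContinuousLinearMap.comp_apply,
    ContinuousLinearMap.prod_apply, fderivInnerCLM_apply, innerSL_apply_apply, smul_eq_mul,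
    ← inner_gradient_left, hsymm, real_inner_self_eq_norm_sq]
  rw [real_inner_comm (∇ u x) (X x), real_inner_comm (∇ u x) (fderiv ℝ (∇ u) x (X x))]
  ring

theorem inner_pohozaevField_of_gradient_eq_smul {r : ℝ} (hgrad : ∇ u x = r • ∇ g x)
    (hu : u x = 0) (hF : F 0 = 0) (c : ℝ) :
    ⟪∇ g x, pohozaevField X u F c x⟫ = ‖∇ u x‖ ^ 2 / 2 * ⟪∇ g x, X x⟫ := by
  simp only [pohozaevField, hgrad, hu, hF, inner_sub_right, inner_smul_right, norm_smul, mul_pow,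
    real_inner_self_eq_norm_sq, real_inner_comm (∇ g x) (X x), Real.norm_eq_abs, sq_abs]
  ring

theorem norm_pohozaevField_le (hX : ‖X x‖ ≤ ‖x‖) (c : ℝ) :
    ‖pohozaevField X u F c x‖ ≤
      (1 + ‖x‖) * (2 * ‖∇ u x‖ ^ 2 + |F (u x)| + c ^ 2 * u x ^ 2) := by
  have hinner : |⟪X x, ∇ u x⟫| ≤ ‖x‖ * ‖∇ u x‖ :=
    (abs_real_inner_le_norm _ _).trans (by gcongr)
  have hamgm : |c * u x| * ‖∇ u x‖ ≤ c ^ 2 * u x ^ 2 + ‖∇ u x‖ ^ 2 := by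
    nlinarith [sq_nonneg (|c * u x| - ‖∇ u x‖), sq_abs (c * u x), sq_nonneg (c * u x),
      sq_nonneg ‖∇ u x‖]
  have hcoeff : |‖∇ u x‖ ^ 2 / 2 - F (u x)| ≤ ‖∇ u x‖ ^ 2 + |F (u x)| :=
    (abs_sub _ _).trans (by rw [abs_of_nonneg (by positivity)]; linarith [sq_nonneg ‖∇ u x‖])
  calc ‖pohozaevField X u F c x‖
      ≤ (|⟪X x, ∇ u x⟫| + |c * u x|) * ‖∇ u x‖ + |‖∇ u x‖ ^ 2 / 2 - F (u x)| * ‖X x‖ := by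
        refine (norm_sub_le _ _).trans ?_
        rw [norm_smul, norm_smul, Real.norm_eq_abs, Real.norm_eq_abs]
        gcongr
        exact abs_add_le _ _
    _ ≤ ‖x‖ * ‖∇ u x‖ * ‖∇ u x‖ + (c ^ 2 * u x ^ 2 + ‖∇ u x‖ ^ 2) +
          (‖∇ u x‖ ^ 2 + |F (u x)|) * ‖x‖ := by
        rw [add_mul]
        gcongr
    _ ≤ (1 + ‖x‖) * (2 * ‖∇ u x‖ ^ 2 + |F (u x)| + c ^ 2 * u x ^ 2) := by
        have hrest : 0 ≤ ‖∇ u x‖ ^ 2 + |F (u x)| + ‖x‖ * (c ^ 2 * u x ^ 2) := by positivity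
        linarith

end PohozaevField

section ClassicalSolution

variable {H : Type*} [NormedAddCommGroup H] [InnerProductSpace ℝ H] [FiniteDimensional ℝ H]

/-- `u` is a classical solution, in `C²(Ω) ∩ C¹(Ω̄)`, of the Dirichlet problem `-Δu = f(u)` in `Ω`,
`u = 0` on `∂Ω`. -/
structure IsClassicalSolution (f : ℝ → ℝ) (Ω : Set H) (u : H → ℝ) : Prop where
  contDiffOn : ContDiffOn ℝ 2 u Ω
  continuousOn : ContinuousOn u (closure Ω)
  continuousOn_fderiv : ContinuousOn (fderiv ℝ u) (closure Ω)
  neg_laplacian_eq : ∀ x ∈ Ω, -(Δ u) x = f (u x)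
  eq_zero_of_mem_frontier : ∀ x ∈ frontier Ω, u x = 0

variable {f F : ℝ → ℝ} {Ω : Set H} {u g : H → ℝ} {X : H → H}

namespace IsClassicalSolution

theorem continuousOn_gradient (hu : IsClassicalSolution f Ω u) :
    ContinuousOn (∇ u) (closure Ω) :=
  (toDual ℝ H).symm.continuous.comp_continuousOn hu.continuousOn_fderiv

theorem contDiffAt (hu : IsClassicalSolution f Ω u) (hΩ : IsOpen Ω) {x : H} (hx : x ∈ Ω) :
    ContDiffAt ℝ 2 u x :=
  hu.contDiffOn.contDiffAt (hΩ.mem_nhds hx)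

theorem contDiffOn_gradient (hu : IsClassicalSolution f Ω u) (hΩ : IsOpen Ω) :
    ContDiffOn ℝ 1 (∇ u) Ω := fun _ hx =>
  (contDiffAt_gradient (n := 1) (hu.contDiffAt hΩ hx)).contDiffWithinAt

theorem contDiffOn_pohozaevField (hu : IsClassicalSolution f Ω u) (hΩ : IsOpen Ω)
    (hF : ContDiff ℝ 1 F) (hX : ContDiffOn ℝ 1 X Ω) (c : ℝ) :
    ContDiffOn ℝ 1 (pohozaevField X u F c) Ω := by
  have hgrad := hu.contDiffOn_gradient hΩ
  have hu' : ContDiffOn ℝ 1 u Ω := hu.contDiffOn.of_le one_le_two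
  exact (((hX.inner ℝ hgrad).add (contDiffOn_const.mul hu')).smul hgrad).sub
    ((((hgrad.norm_sq ℝ).div_const 2).sub (hF.comp_contDiffOn hu')).smul hX)

theorem continuousOn_pohozaevField (hu : IsClassicalSolution f Ω u) (hF : Continuous F)
    (hX : ContinuousOn X (closure Ω)) (c : ℝ) :
    ContinuousOn (pohozaevField X u F c) (closure Ω) := by
  have hgrad := hu.continuousOn_gradient
  exact (((hX.inner hgrad).add (continuousOn_const.mul hu.continuousOn)).smul hgrad).sub
    ((((hgrad.norm.pow 2).div_const 2).sub (hF.comp_continuousOn hu.continuousOn)).smul hX)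

theorem inner_gradient_pohozaevField_nonpos (hu : IsClassicalSolution f Ω u)
    (h : IsDefiningFunction g Ω) (hF0 : F 0 = 0) (hX : ∀ x ∈ frontier Ω, ⟪∇ g x, X x⟫ ≤ 0)
    (c : ℝ) {x : H} (hx : x ∈ frontier Ω) : ⟪∇ g x, pohozaevField X u F c x⟫ ≤ 0 := by
  have hgx := (h.mem_frontier_iff x).1 hx
  have hux := hu.eq_zero_of_mem_frontier x hx
  obtain ⟨r, hr⟩ : ∃ r : ℝ, ∇ u x = r • ∇ g x :=
    exists_gradient_eq_smul_of_const_on_level (h.contDiff.contDiffAt.of_le one_le_two)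
      (h.gradient_ne_zero x hgx) fun y hy => by
        rw [hux, hu.eq_zero_of_mem_frontier y ((h.mem_frontier_iff y).2 (hy.trans hgx))]
  rw [inner_pohozaevField_of_gradient_eq_smul hr hux hF0]
  exact mul_nonpos_of_nonneg_of_nonpos (by positivity) (hX x hx)

variable [MeasurableSpace H] [BorelSpace H] {μ : Measure H} [μ.IsAddHaarMeasure]

theorem pohozaev_inequality (hu : IsClassicalSolution f Ω u) (h : IsDefiningFunction g Ω)
    (hf : Continuous f) (hF : ∀ t, HasDerivAt F (f t) t) (hF0 : F 0 = 0)
    (hX : ContDiffOn ℝ 1 X Ω) (hX' : ContinuousOn X (closure Ω)) (hXnorm : ∀ x ∈ Ω, ‖X x‖ ≤ ‖x‖)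
    (hXout : ∀ x ∈ frontier Ω, ⟪∇ g x, X x⟫ ≤ 0) (c : ℝ)
    (hgrad_int : IntegrableOn (fun x => ‖∇ u x‖ ^ 2) Ω μ)
    (hF_int : IntegrableOn (fun x => F (u x)) Ω μ) (hu_int : IntegrableOn (fun x => u x ^ 2) Ω μ)
    (hint : IntegrableOn (pohozaevDensity X u f F c) Ω μ) :
    0 ≤ ∫ x in Ω, pohozaevDensity X u f F c x ∂μ := by
  have hΩ := h.isOpen
  have hF1 : ContDiff ℝ 1 F := contDiff_one_iff_deriv.2
    ⟨fun t => (hF t).differentiableAt, by rwa [funext fun t => (hF t).deriv]⟩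
  have hfield := hu.contDiffOn_pohozaevField hΩ hF1 hX c
  have hdiv : EqOn (divergence (pohozaevField X u F c)) (pohozaevDensity X u f F c) Ω :=
    fun x hx => divergence_pohozaevField
      ((hX.contDiffAt (hΩ.mem_nhds hx)).differentiableAt one_ne_zero) (hu.contDiffAt hΩ hx)
      (hF (u x)) (hu.neg_laplacian_eq x hx) c
  have hgrowth : IntegrableOn (fun x => ‖pohozaevField X u F c x‖ / (1 + ‖x‖)) Ω μ := by
    refine (((hgrad_int.const_mul 2).add hF_int.abs).add (hu_int.const_mul (c ^ 2))).mono'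
      ((hfield.continuousOn.norm.div₀ (by fun_prop) fun x _ => by positivity).aestronglyMeasurable
        hΩ.measurableSet) ((ae_restrict_iff' hΩ.measurableSet).2 (ae_of_all _ fun x hx => ?_))
    rw [Real.norm_of_nonneg (by positivity), div_le_iff₀' (by positivity)]
    exact norm_pohozaevField_le (hXnorm x hx) c
  rw [← setIntegral_congr_fun hΩ.measurableSet hdiv]
  exact h.setIntegral_divergence_nonneg hfield
    (hu.continuousOn_pohozaevField hF1.continuous hX' c)
    (fun x hx => hu.inner_gradient_pohozaevField_nonpos h hF0 hXout c hx)
    (hint.congr_fun hdiv.symm hΩ.measurableSet) hgrowth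

end IsClassicalSolution

end ClassicalSolution

section Poincare

variable {H : Type*} [NormedAddCommGroup H] [InnerProductSpace ℝ H] [FiniteDimensional ℝ H]
  {K : Submodule ℝ H} {g u η : H → ℝ} {Ω : Set H} {b R : ℝ}

theorem divergence_starProjection (K : Submodule ℝ H) (x : H) :
    divergence K.starProjection x = finrank ℝ K := by
  have hproj : LinearMap.IsProj K (K.starProjection : H →ₗ[ℝ] H) :=
    ⟨fun v => K.starProjection_apply_mem v, fun v hv => K.starProjection_eq_self_iff.2 hv⟩
  rw [divergence, ContinuousLinearMap.fderiv, hproj.trace]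

theorem divergence_mul_sq_smul_starProjection {x : H}
    (hη : DifferentiableAt ℝ η (Kᗮ.starProjection x)) (hu : DifferentiableAt ℝ u x) :
    divergence (fun y => (η (Kᗮ.starProjection y) * u y ^ 2) • K.starProjection y) x =
      η (Kᗮ.starProjection x) *
        (finrank ℝ K * u x ^ 2 + 2 * u x * ⟪K.starProjection x, ∇ u x⟫) := by
  have hη' := hη.hasFDerivAt.comp x Kᗮ.starProjection.hasFDerivAt
  have hφ : HasFDerivAt (fun y => η (Kᗮ.starProjection y) * u y ^ 2) _ x :=
    hη'.mul (hu.hasFDerivAt.pow 2)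
  have hzero : Kᗮ.starProjection (K.starProjection x) = 0 :=
    Submodule.starProjection_orthogonal_apply_eq_zero (K.starProjection_apply_mem x)
  rw [divergence_smul hφ.differentiableAt K.starProjection.differentiableAt,
    divergence_starProjection, hφ.fderiv, real_inner_comm, inner_gradient_left]
  simp [hzero]
  ring

theorem radialCutoff_starProjection_eq_zero {x : H} (hR : 0 < R) (hb : ‖K.starProjection x‖ ≤ b)
    (hx : x ∉ Metric.closedBall 0 (b + 2 * R)) : radialCutoff R (Kᗮ.starProjection x) = 0 := by
  rw [mem_closedBall_zero_iff, not_le] at hx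
  refine radialCutoff_eq_zero hR ?_
  have hnorm := norm_add_le (K.starProjection x) (Kᗮ.starProjection x)
  rw [Submodule.starProjection_add_starProjection_orthogonal] at hnorm
  linarith

section Integral

variable [MeasurableSpace H] [BorelSpace H]

section Integrability

variable {μ : Measure H} [IsFiniteMeasureOnCompacts μ]

theorem integrableOn_radialCutoff_mul_sq (hΩ : IsOpen Ω)
    (hu : ContinuousOn u (closure Ω)) (hb : ∀ x ∈ Ω, ‖K.starProjection x‖ ≤ b) (hR : 0 < R) :
    IntegrableOn (fun x => radialCutoff R (Kᗮ.starProjection x) * u x ^ 2) Ω μ := by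
  have hη : Continuous (radialCutoff R : H → ℝ) := (contDiff_radialCutoff (n := 0) R).continuous
  have hcompact : IsCompact (closure Ω ∩ Metric.closedBall 0 (b + 2 * R)) :=
    (isCompact_closedBall 0 _).inter_left isClosed_closure
  have hcont : ContinuousOn (fun x => radialCutoff R (Kᗮ.starProjection x) * u x ^ 2)
      (closure Ω ∩ Metric.closedBall 0 (b + 2 * R)) :=
    (hη.comp Kᗮ.starProjection.continuous).continuousOn.mul ((hu.mono inter_subset_left).pow 2)
  refine ((hcont.integrableOn_compact hcompact).mono_set
    (inter_subset_inter_left _ subset_closure)).of_forall_sdiff_eq_zero hΩ.measurableSet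
    fun x hx => ?_
  have hball : x ∉ Metric.closedBall 0 (b + 2 * R) := fun hx' => hx.2 ⟨hx.1, hx'⟩
  rw [radialCutoff_starProjection_eq_zero hR (hb x hx.1) hball, zero_mul]

theorem integrableOn_radialCutoff_mul_add (hΩ : IsOpen Ω)
    (hu : ContDiffOn ℝ 1 u Ω) (hu' : ContinuousOn u (closure Ω))
    (hb : ∀ x ∈ Ω, ‖K.starProjection x‖ ≤ b)
    (hint : IntegrableOn (fun x => ⟪K.starProjection x, ∇ u x⟫ ^ 2) Ω μ) (hR : 0 < R) :
    IntegrableOn (fun x => radialCutoff R (Kᗮ.starProjection x) *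
      (finrank ℝ K * u x ^ 2 + 2 * u x * ⟪K.starProjection x, ∇ u x⟫)) Ω μ := by
  have hη : Continuous (radialCutoff R : H → ℝ) := (contDiff_radialCutoff (n := 0) R).continuous
  have hgrad : ContinuousOn (∇ u) Ω := (toDual ℝ H).symm.continuous.comp_continuousOn
    (hu.continuousOn_fderiv_of_isOpen hΩ le_rfl)
  have huc := hu.continuousOn
  have hmeas : ContinuousOn (fun x => radialCutoff R (Kᗮ.starProjection x) *
      (finrank ℝ K * u x ^ 2 + 2 * u x * ⟪K.starProjection x, ∇ u x⟫)) Ω :=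
    (hη.comp Kᗮ.starProjection.continuous).continuousOn.mul <|
      (continuousOn_const.mul (huc.pow 2)).add <| (continuousOn_const.mul huc).mul <|
        K.starProjection.continuous.continuousOn.inner hgrad
  refine (((integrableOn_radialCutoff_mul_sq hΩ hu' hb hR).const_mul (finrank ℝ K + 1)).add
    hint).mono' (hmeas.aestronglyMeasurable hΩ.measurableSet) (ae_of_all _ fun x => ?_)
  set s := radialCutoff R (Kᗮ.starProjection x)
  set r := ⟪K.starProjection x, ∇ u x⟫
  have hs0 : 0 ≤ s := radialCutoff_nonneg R _
  have hs1 : s ≤ 1 := radialCutoff_le_one R _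
  have habs : |finrank ℝ K * u x ^ 2 + 2 * u x * r| ≤ (finrank ℝ K + 1) * u x ^ 2 + r ^ 2 :=
    abs_le.2 ⟨by nlinarith [sq_nonneg (u x + r), sq_nonneg (u x)],
      by nlinarith [sq_nonneg (u x - r)]⟩
  rw [norm_mul, Real.norm_of_nonneg hs0, Real.norm_eq_abs]
  calc s * |finrank ℝ K * u x ^ 2 + 2 * u x * r|
      ≤ s * ((finrank ℝ K + 1) * u x ^ 2 + r ^ 2) := by gcongr
    _ ≤ (finrank ℝ K + 1) * (s * u x ^ 2) + r ^ 2 := by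
        linarith [mul_le_of_le_one_left (sq_nonneg r) hs1]

theorem aecover_norm_starProjection_le (K : Submodule ℝ H) (ν : Measure H) :
    AECover ν atTop fun R : ℝ => {x | ‖K.starProjection x‖ ≤ R} where
  ae_eventually_mem := ae_of_all _ fun x => eventually_ge_atTop ‖K.starProjection x‖
  measurableSet _ := (isClosed_le (by fun_prop) continuous_const).measurableSet

theorem integrableOn_sq_starProjection_le (hΩ : IsOpen Ω)
    (hu : ContinuousOn u (closure Ω)) (hb : ∀ x ∈ Ω, ‖K.starProjection x‖ ≤ b) (R : ℝ) :
    IntegrableOn (fun x => u x ^ 2) {x | ‖Kᗮ.starProjection x‖ ≤ R} (μ.restrict Ω) := by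
  have hpos : 0 < max R 1 := zero_lt_one.trans_le (le_max_right R 1)
  have hcutoff : IntegrableOn (fun x => u x ^ 2) {x | ‖Kᗮ.starProjection x‖ ≤ max R 1}
      (μ.restrict Ω) :=
    (integrableOn_radialCutoff_mul_sq hΩ hu hb hpos).integrableOn.congr_fun
      (fun x hx => by simp only [radialCutoff_eq_one hpos hx, one_mul])
      ((aecover_norm_starProjection_le Kᗮ μ).measurableSet _)
  exact hcutoff.mono_set fun x (hx : _ ≤ R) => hx.trans (le_max_left R 1)

end Integrability

variable {μ : Measure H} [μ.IsAddHaarMeasure]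

/-- The divergence inequality applied to `-η u² P`, where `P` is the projection onto `K` and `η` a
cutoff in the directions of `Kᗮ`. -/
theorem setIntegral_radialCutoff_mul_add_nonpos (h : IsDefiningFunction g Ω)
    (hu : ContDiffOn ℝ 1 u Ω) (hu' : ContinuousOn u (closure Ω)) (hu0 : ∀ x ∈ frontier Ω, u x = 0)
    (hb : ∀ x ∈ Ω, ‖K.starProjection x‖ ≤ b)
    (hint : IntegrableOn (fun x => ⟪K.starProjection x, ∇ u x⟫ ^ 2) Ω μ) (hR : 0 < R) :
    ∫ x in Ω, radialCutoff R (Kᗮ.starProjection x) *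
      (finrank ℝ K * u x ^ 2 + 2 * u x * ⟪K.starProjection x, ∇ u x⟫) ∂μ ≤ 0 := by
  have hη : ContDiff ℝ 1 (fun z : H => -radialCutoff R z) := (contDiff_radialCutoff R).neg
  have hηQ : ContDiff ℝ 1 fun x => -radialCutoff R (Kᗮ.starProjection x) :=
    hη.comp Kᗮ.starProjection.contDiff
  have hdiv : EqOn (divergence fun y =>
        (-radialCutoff R (Kᗮ.starProjection y) * u y ^ 2) • K.starProjection y)
      (fun x => -(radialCutoff R (Kᗮ.starProjection x) *
        (finrank ℝ K * u x ^ 2 + 2 * u x * ⟪K.starProjection x, ∇ u x⟫))) Ω := fun x hx => by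
    refine (divergence_mul_sq_smul_starProjection (hη.differentiable one_ne_zero _)
      ((hu.contDiffAt (h.isOpen.mem_nhds hx)).differentiableAt one_ne_zero)).trans ?_
    rw [neg_mul]
  have hnonneg := h.setIntegral_divergence_nonneg_of_compact (μ := μ)
    ((hηQ.contDiffOn.mul (hu.pow 2)).fun_smul K.starProjection.contDiff.contDiffOn)
    ((hηQ.continuous.continuousOn.mul (hu'.pow 2)).smul
      K.starProjection.continuous.continuousOn)
    (isCompact_closedBall 0 (b + 2 * R))
    (fun x hx hxR => by
      rw [radialCutoff_starProjection_eq_zero hR (hb x hx) hxR, neg_zero, zero_mul, zero_smul])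
    (fun x hx => by simp [hu0 x hx])
    ((integrableOn_radialCutoff_mul_add h.isOpen hu hu' hb hint hR).neg.congr_fun hdiv.symm
      h.isOpen.measurableSet)
  rw [setIntegral_congr_fun h.isOpen.measurableSet hdiv, integral_neg] at hnonneg
  exact neg_nonneg.1 hnonneg

theorem setIntegral_radialCutoff_mul_sq_le (h : IsDefiningFunction g Ω)
    (hu : ContDiffOn ℝ 1 u Ω) (hu' : ContinuousOn u (closure Ω)) (hu0 : ∀ x ∈ frontier Ω, u x = 0)
    (hb : ∀ x ∈ Ω, ‖K.starProjection x‖ ≤ b)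
    (hint : IntegrableOn (fun x => ⟪K.starProjection x, ∇ u x⟫ ^ 2) Ω μ) (hR : 0 < R) :
    (finrank ℝ K : ℝ) ^ 2 * ∫ x in Ω, radialCutoff R (Kᗮ.starProjection x) * u x ^ 2 ∂μ ≤
      4 * ∫ x in Ω, ⟪K.starProjection x, ∇ u x⟫ ^ 2 ∂μ := by
  have hnonpos := setIntegral_radialCutoff_mul_add_nonpos h hu hu' hu0 hb hint hR
  have hsq := integrableOn_radialCutoff_mul_sq (μ := μ) h.isOpen hu' hb hR
  have hadd := integrableOn_radialCutoff_mul_add h.isOpen hu hu' hb hint hR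
  have hmono := integral_mono ((hsq.const_mul ((finrank ℝ K : ℝ) ^ 2)).sub (hint.const_mul 4))
    (hadd.const_mul (2 * finrank ℝ K)) fun x => ?_
  · simp only [Pi.sub_apply] at hmono
    rw [integral_sub (hsq.const_mul _) (hint.const_mul _), integral_const_mul, integral_const_mul,
      integral_const_mul] at hmono
    linarith [mul_nonpos_of_nonneg_of_nonpos (by positivity : (0 : ℝ) ≤ 2 * finrank ℝ K) hnonpos]
  set s := radialCutoff R (Kᗮ.starProjection x)
  set r := ⟪K.starProjection x, ∇ u x⟫
  have hs0 : 0 ≤ s := radialCutoff_nonneg R _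
  have hs1 : s ≤ 1 := radialCutoff_le_one R _
  have hsquare := mul_nonneg hs0 (sq_nonneg (finrank ℝ K * u x + 2 * r))
  have hr : s * r ^ 2 ≤ r ^ 2 := mul_le_of_le_one_left (sq_nonneg r) hs1
  simp only [Pi.sub_apply]
  linarith

theorem poincare_inequality (h : IsDefiningFunction g Ω)
    (hu : ContDiffOn ℝ 1 u Ω) (hu' : ContinuousOn u (closure Ω)) (hu0 : ∀ x ∈ frontier Ω, u x = 0)
    (hb : ∀ x ∈ Ω, ‖K.starProjection x‖ ≤ b) (hK : K ≠ ⊥)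
    (hint : IntegrableOn (fun x => ⟪K.starProjection x, ∇ u x⟫ ^ 2) Ω μ) :
    IntegrableOn (fun x => u x ^ 2) Ω μ ∧ (finrank ℝ K : ℝ) ^ 2 * ∫ x in Ω, u x ^ 2 ∂μ ≤
      4 * ∫ x in Ω, ⟪K.starProjection x, ∇ u x⟫ ^ 2 ∂μ := by
  have hn : 0 < (finrank ℝ K : ℝ) ^ 2 := by
    have := Submodule.one_le_finrank_iff.2 hK
    positivity
  set I := 4 * ∫ x in Ω, ⟪K.starProjection x, ∇ u x⟫ ^ 2 ∂μ
  have hcover := aecover_norm_starProjection_le Kᗮ (μ.restrict Ω)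
  have hloc := integrableOn_sq_starProjection_le (μ := μ) h.isOpen hu' hb
  have hbound : ∀ R > 0, ∫ x in {x | ‖Kᗮ.starProjection x‖ ≤ R}, u x ^ 2 ∂(μ.restrict Ω) ≤
      I / finrank ℝ K ^ 2 := fun R hR => by
    rw [le_div_iff₀' hn]
    refine le_trans ?_ (setIntegral_radialCutoff_mul_sq_le h hu hu' hu0 hb hint hR)
    gcongr
    refine (setIntegral_congr_fun (hcover.measurableSet R) fun x hx => ?_).trans_le
      (setIntegral_le_integral (integrableOn_radialCutoff_mul_sq h.isOpen hu' hb hR)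
        (ae_of_all _ fun x => mul_nonneg (radialCutoff_nonneg R _) (sq_nonneg (u x))))
    simp only [radialCutoff_eq_one hR hx, one_mul]
  have hsq : IntegrableOn (fun x => u x ^ 2) Ω μ :=
    hcover.integrable_of_integral_bounded_of_nonneg_ae _ hloc
      (ae_of_all _ fun x => sq_nonneg (u x)) ((eventually_gt_atTop 0).mono hbound)
  refine ⟨hsq, (le_div_iff₀' hn).1 ?_⟩
  exact le_of_tendsto (hcover.integral_tendsto_of_countably_generated hsq)
    ((eventually_gt_atTop 0).mono hbound)

end Integral

theorem eqOn_zero_of_inner_starProjection_eq_zero (h : IsDefiningFunction g Ω)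
    (hu : ContDiffOn ℝ 1 u Ω) (hu' : ContinuousOn u (closure Ω)) (hu0 : ∀ x ∈ frontier Ω, u x = 0)
    (hb : ∀ x ∈ Ω, ‖K.starProjection x‖ ≤ b) (hK : K ≠ ⊥)
    (hr : ∀ x ∈ Ω, ⟪K.starProjection x, ∇ u x⟫ = 0) : EqOn u 0 Ω := by
  borelize H
  have hr' : EqOn 0 (fun x => ⟪K.starProjection x, ∇ u x⟫ ^ 2) Ω := fun x hx => by simp [hr x hx]
  obtain ⟨hint, hle⟩ := poincare_inequality (μ := Measure.addHaar) h hu hu' hu0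
    hb hK (integrableOn_zero.congr_fun hr' h.isOpen.measurableSet)
  rw [← setIntegral_congr_fun h.isOpen.measurableSet hr'] at hle
  have hzero : ∫ x in Ω, u x ^ 2 ∂Measure.addHaar = 0 := by
    have hn := Submodule.one_le_finrank_iff.2 hK
    refine le_antisymm (nonpos_of_mul_nonpos_right (hle.trans_eq (by simp)) (by positivity)) ?_
    exact integral_nonneg fun x => sq_nonneg (u x)
  refine Measure.eqOn_open_of_ae_eq (μ := Measure.addHaar) ?_ h.isOpen hu.continuousOn
    continuousOn_const
  filter_upwards [(integral_eq_zero_iff_of_nonneg (fun x => sq_nonneg (u x)) hint).1 hzero]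
    with x hx using pow_eq_zero_iff two_ne_zero |>.1 hx

end Poincare

section Shell

variable {H : Type*} [NormedAddCommGroup H] [InnerProductSpace ℝ H] [FiniteDimensional ℝ H]

theorem inner_starProjection_self_left (K : Submodule ℝ H) (x v : H) :
    ⟪K.starProjection x, K.starProjection v⟫ = ⟪K.starProjection x, v⟫ := by
  rw [← K.inner_starProjection_left_eq_right, K.starProjection_eq_self_iff.2
    (K.starProjection_apply_mem x)]

theorem hasFDerivAt_norm_sq_starProjection (K : Submodule ℝ H) (x : H) :
    HasFDerivAt (fun y => ‖K.starProjection y‖ ^ 2)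
      ((2 : ℝ) • innerSL ℝ (K.starProjection x)) x := by
  refine K.starProjection.hasFDerivAt.norm_sq.congr_fderiv ?_
  ext v
  simp [inner_starProjection_self_left, two_mul]

theorem hasFDerivAt_norm_starProjection {K : Submodule ℝ H} {x : H} (hx : K.starProjection x ≠ 0) :
    HasFDerivAt (fun y => ‖K.starProjection y‖)
      (‖K.starProjection x‖⁻¹ • innerSL ℝ (K.starProjection x)) x := by
  have hsqrt := (hasFDerivAt_norm_sq_starProjection K x).sqrt (by simpa using hx)
  simp only [Real.sqrt_sq (norm_nonneg _), smul_smul] at hsqrt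
  convert hsqrt using 2
  field_simp

/-- The cylindrical shell of radii `a` and `b` around `Kᗮ`: the points whose component along `K`
has norm in `(a, b)`. -/
def shell (K : Submodule ℝ H) (a b : ℝ) : Set H :=
  {x | a < ‖K.starProjection x‖ ∧ ‖K.starProjection x‖ < b}

/-- A polynomial defining function of `shell K a b`. -/
def shellDefiningFunction (K : Submodule ℝ H) (a b : ℝ) (x : H) : ℝ :=
  (‖K.starProjection x‖ ^ 2 - a ^ 2) * (b ^ 2 - ‖K.starProjection x‖ ^ 2)

variable {K : Submodule ℝ H} {a b r : ℝ} {n : ℕ}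

theorem gradient_shellDefiningFunction (x : H) :
    ∇ (shellDefiningFunction K a b) x =
      (2 * (a ^ 2 + b ^ 2 - 2 * ‖K.starProjection x‖ ^ 2)) • K.starProjection x := by
  have hsq := hasFDerivAt_norm_sq_starProjection K x
  have hg : HasFDerivAt (shellDefiningFunction K a b) _ x :=
    (hsq.sub_const (a ^ 2)).mul (hsq.const_sub (b ^ 2))
  refine ext_inner_right ℝ fun v => ?_
  rw [inner_gradient_left, hg.fderiv, inner_smul_left]
  simp
  ring

theorem shellDefiningFunction_eq_zero_iff (ha : 0 < a) (hb : 0 < b) (x : H) :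
    shellDefiningFunction K a b x = 0 ↔ ‖K.starProjection x‖ = a ∨ ‖K.starProjection x‖ = b := by
  rw [shellDefiningFunction, mul_eq_zero, sub_eq_zero, sub_eq_zero,
    pow_left_inj₀ (norm_nonneg _) ha.le two_ne_zero,
    pow_left_inj₀ hb.le (norm_nonneg _) two_ne_zero, eq_comm (a := b)]

theorem isDefiningFunction_shellDefiningFunction (ha : 0 < a) (hab : a < b) :
    IsDefiningFunction (shellDefiningFunction K a b) (shell K a b) where
  contDiff := (((K.starProjection.contDiff.norm_sq ℝ).sub contDiff_const).mul
    (contDiff_const.sub (K.starProjection.contDiff.norm_sq ℝ)))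
  mem_iff x := by
    have hb := ha.trans hab
    have hlt : a ^ 2 < b ^ 2 := pow_lt_pow_left₀ hab ha.le two_ne_zero
    rw [shellDefiningFunction, mul_pos_iff, sub_pos, sub_pos, sub_neg, sub_neg,
      pow_lt_pow_iff_left₀ ha.le (norm_nonneg _) two_ne_zero,
      pow_lt_pow_iff_left₀ (norm_nonneg _) hb.le two_ne_zero]
    exact (or_iff_left fun h => (hlt.trans (h.2.trans h.1)).false).symm
  gradient_ne_zero x hx := by
    have hb := ha.trans hab
    have hlt : a ^ 2 < b ^ 2 := pow_lt_pow_left₀ hab ha.le two_ne_zero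
    rw [gradient_shellDefiningFunction]
    refine smul_ne_zero (mul_ne_zero two_ne_zero ?_) (norm_ne_zero_iff.1 ?_) <;>
      rcases (shellDefiningFunction_eq_zero_iff ha hb x).1 hx with hr | hr <;> rw [hr]
    · linarith
    · linarith
    · exact ha.ne'
    · exact hb.ne'

theorem starProjection_ne_zero_of_mem_closure_shell (ha : 0 < a) (hab : a < b) {x : H}
    (hx : x ∈ closure (shell K a b)) : K.starProjection x ≠ 0 := fun hzero => by
  rw [(isDefiningFunction_shellDefiningFunction ha hab).mem_closure_iff, shellDefiningFunction,
    hzero, norm_zero] at hx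
  have := mul_pos (pow_pos ha 2) (pow_pos (ha.trans hab) 2)
  linarith

/-- The solution `φ(r) = (1 - (a / r) ^ n) / n` of `n φ + r φ' = 1`, `φ(a) = 0`: the field
`φ(|y|) y` on `ℝⁿ` has divergence `1` and vanishes on the sphere of radius `a`. -/
def shellWeight (n : ℕ) (a r : ℝ) : ℝ :=
  (1 - (a / r) ^ n) / n

theorem shellWeight_self (ha : a ≠ 0) : shellWeight n a a = 0 := by
  simp [shellWeight, ha]

theorem nat_mul_shellWeight (hn : n ≠ 0) : n * shellWeight n a r = 1 - (a / r) ^ n :=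
  mul_div_cancel₀ _ (Nat.cast_ne_zero.2 hn)

theorem shellWeight_pos (hn : n ≠ 0) (ha : 0 < a) (har : a < r) : 0 < shellWeight n a r := by
  have hpow : (a / r) ^ n < 1 :=
    pow_lt_one₀ (by have := ha.trans har; positivity) ((div_lt_one (ha.trans har)).2 har) hn
  exact div_pos (sub_pos.2 hpow) (by positivity)

theorem shellWeight_nonneg (ha : 0 ≤ a) (har : a ≤ r) : 0 ≤ shellWeight n a r :=
  div_nonneg (sub_nonneg.2 (pow_le_one₀ (div_nonneg ha (ha.trans har))
    (div_le_one_of_le₀ har (ha.trans har)))) n.cast_nonneg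

theorem shellWeight_le_one (ha : 0 ≤ a) (hr : 0 ≤ r) : shellWeight n a r ≤ 1 := by
  rcases Nat.eq_zero_or_pos n with rfl | hn
  · simp [shellWeight]
  have hn' : (1 : ℝ) ≤ n := by exact_mod_cast hn
  refine (div_le_one (by positivity)).2 (le_trans ?_ hn')
  exact sub_le_self 1 (by positivity)

theorem hasDerivAt_shellWeight (hn : n ≠ 0) (hr : r ≠ 0) :
    HasDerivAt (shellWeight n a) ((a / r) ^ n / r) r := by
  have hderiv := ((((hasDerivAt_inv hr).const_mul a).fun_pow n).const_sub 1).div_const (n : ℝ)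
  refine hderiv.congr_deriv ?_
  rw [div_eq_mul_inv a r, ← pow_sub_one_mul hn (a * r⁻¹)]
  field_simp

/-- The multiplier of the Pohozaev identity in a cylindrical shell. Around `Kᗮ` it is radial and
vanishes on the inner boundary; in the directions of `Kᗮ` it is the identity. -/
def shellMultiplier (K : Submodule ℝ H) (a : ℝ) (x : H) : H :=
  shellWeight (finrank ℝ K) a ‖K.starProjection x‖ • K.starProjection x + Kᗮ.starProjection x

variable {x : H}

theorem finrank_ne_zero_of_starProjection_ne_zero (hx : K.starProjection x ≠ 0) :
    finrank ℝ K ≠ 0 := fun hK => hx <| by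
  rw [Submodule.finrank_eq_zero.1 hK, Submodule.starProjection_bot, zero_apply]

theorem contDiffAt_shellMultiplier (hx : K.starProjection x ≠ 0) :
    ContDiffAt ℝ 1 (shellMultiplier K a) x := by
  have hnorm : ContDiffAt ℝ 1 (fun y => ‖K.starProjection y‖) x :=
    K.starProjection.contDiff.contDiffAt.norm ℝ hx
  have hratio := (contDiffAt_const (c := a)).div hnorm (norm_ne_zero_iff.2 hx)
  exact (((contDiffAt_const.sub (hratio.pow _)).div_const _).smul
    K.starProjection.contDiff.contDiffAt).add Kᗮ.starProjection.contDiff.contDiffAt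

theorem norm_shellMultiplier_le (ha : 0 ≤ a) (hx : a ≤ ‖K.starProjection x‖) :
    ‖shellMultiplier K a x‖ ≤ ‖x‖ := by
  have hφ0 := shellWeight_nonneg (n := finrank ℝ K) ha hx
  have hφ1 : shellWeight (finrank ℝ K) a ‖K.starProjection x‖ ≤ 1 :=
    shellWeight_le_one ha (norm_nonneg _)
  have horth : ⟪K.starProjection x, Kᗮ.starProjection x⟫ = 0 :=
    Submodule.inner_right_of_mem_orthogonal (K.starProjection_apply_mem x)
      (Kᗮ.starProjection_apply_mem x)
  refine le_of_sq_le_sq ?_ (norm_nonneg x)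
  rw [shellMultiplier, norm_add_sq_real, inner_smul_left, horth, norm_smul,
    Real.norm_of_nonneg hφ0, Submodule.norm_sq_eq_add_norm_sq_starProjection x K, mul_zero,
    mul_zero, add_zero]
  gcongr
  exact mul_le_of_le_one_left (norm_nonneg _) hφ1

theorem hasFDerivAt_shellWeight_norm_starProjection (hx : K.starProjection x ≠ 0) :
    HasFDerivAt (fun y => shellWeight (finrank ℝ K) a ‖K.starProjection y‖)
      (((a / ‖K.starProjection x‖) ^ finrank ℝ K / ‖K.starProjection x‖ ^ 2) •
        innerSL ℝ (K.starProjection x)) x := by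
  have hcomp := (hasDerivAt_shellWeight (a := a) (finrank_ne_zero_of_starProjection_ne_zero hx)
    (norm_ne_zero_iff.2 hx)).comp_hasFDerivAt x (hasFDerivAt_norm_starProjection hx)
  refine hcomp.congr_fderiv ?_
  rw [smul_smul, ← div_eq_mul_inv, div_div, sq]

theorem divergence_shellMultiplier (hx : K.starProjection x ≠ 0) :
    divergence (shellMultiplier K a) x = 1 + finrank ℝ Kᗮ := by
  have hφ := hasFDerivAt_shellWeight_norm_starProjection (a := a) hx
  have hP := K.starProjection.differentiableAt (x := x)
  have hr : ‖K.starProjection x‖ ≠ 0 := norm_ne_zero_iff.2 hx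
  have hweight := nat_mul_shellWeight (a := a) (r := ‖K.starProjection x‖)
    (finrank_ne_zero_of_starProjection_ne_zero hx)
  refine (divergence_add (hφ.differentiableAt.fun_smul hP)
    Kᗮ.starProjection.differentiableAt).trans ?_
  rw [divergence_smul hφ.differentiableAt hP, divergence_starProjection, divergence_starProjection,
    hφ.fderiv, smul_apply, innerSL_apply_apply, real_inner_self_eq_norm_sq, smul_eq_mul,
    div_mul_cancel₀ _ (pow_ne_zero 2 hr), mul_comm, hweight, sub_add_cancel]

theorem inner_fderiv_shellMultiplier (hx : K.starProjection x ≠ 0) (v : H) :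
    ⟪fderiv ℝ (shellMultiplier K a) x v, v⟫ =
      shellWeight (finrank ℝ K) a ‖K.starProjection x‖ * ‖K.starProjection v‖ ^ 2 +
      (a / ‖K.starProjection x‖) ^ finrank ℝ K / ‖K.starProjection x‖ ^ 2 *
        ⟪K.starProjection x, v⟫ ^ 2 + ‖Kᗮ.starProjection v‖ ^ 2 := by
  have hX : HasFDerivAt (shellMultiplier K a) _ x :=
    ((hasFDerivAt_shellWeight_norm_starProjection hx).smul K.starProjection.hasFDerivAt).add
      Kᗮ.starProjection.hasFDerivAt
  have hself (L : Submodule ℝ H) : ⟪L.starProjection v, v⟫ = ‖L.starProjection v‖ ^ 2 := by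
    rw [← inner_starProjection_self_left, real_inner_self_eq_norm_sq]
  rw [hX.fderiv]
  simp only [add_apply, smul_apply, ContinuousLinearMap.smulRight_apply, innerSL_apply_apply,
    inner_add_left, real_inner_smul_left, hself, smul_eq_mul]
  ring

theorem inner_fderiv_shellMultiplier_nonneg (ha : 0 < a) (hx : a ≤ ‖K.starProjection x‖) (v : H) :
    0 ≤ ⟪fderiv ℝ (shellMultiplier K a) x v, v⟫ := by
  have hφ0 := shellWeight_nonneg (n := finrank ℝ K) ha.le hx
  rw [inner_fderiv_shellMultiplier (norm_pos_iff.1 (ha.trans_le hx))]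
  positivity

theorem inner_fderiv_shellMultiplier_le (ha : 0 ≤ a) (hx : K.starProjection x ≠ 0) (v : H) :
    ⟪fderiv ℝ (shellMultiplier K a) x v, v⟫ ≤ ‖v‖ ^ 2 -
      (finrank ℝ K - 1) * shellWeight (finrank ℝ K) a ‖K.starProjection x‖ *
        ‖K.starProjection v‖ ^ 2 := by
  have hweight := nat_mul_shellWeight (a := a) (r := ‖K.starProjection x‖)
    (finrank_ne_zero_of_starProjection_ne_zero hx)
  have hcauchy : ⟪K.starProjection x, v⟫ ^ 2 ≤
      ‖K.starProjection x‖ ^ 2 * ‖K.starProjection v‖ ^ 2 := by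
    rw [← inner_starProjection_self_left, ← mul_pow]
    exact sq_le_sq.2 ((abs_real_inner_le_norm _ _).trans (le_abs_self _))
  have hradial : (a / ‖K.starProjection x‖) ^ finrank ℝ K / ‖K.starProjection x‖ ^ 2 *
      ⟪K.starProjection x, v⟫ ^ 2 ≤
      (a / ‖K.starProjection x‖) ^ finrank ℝ K * ‖K.starProjection v‖ ^ 2 := by
    rw [div_mul_eq_mul_div, div_le_iff₀ (by positivity), mul_assoc,
      mul_comm (‖K.starProjection v‖ ^ 2)]
    gcongr
  rw [inner_fderiv_shellMultiplier hx, Submodule.norm_sq_eq_add_norm_sq_starProjection v K]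
  linear_combination hradial + ‖K.starProjection v‖ ^ 2 * hweight

theorem inner_gradient_shellMultiplier_nonpos (ha : 0 < a) (hab : a < b)
    (hx : x ∈ frontier (shell K a b)) :
    ⟪∇ (shellDefiningFunction K a b) x, shellMultiplier K a x⟫ ≤ 0 := by
  have horth : ⟪K.starProjection x, Kᗮ.starProjection x⟫ = 0 :=
    Submodule.inner_right_of_mem_orthogonal (K.starProjection_apply_mem x)
      (Kᗮ.starProjection_apply_mem x)
  rw [(isDefiningFunction_shellDefiningFunction ha hab).mem_frontier_iff,
    shellDefiningFunction_eq_zero_iff ha (ha.trans hab)] at hx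
  rw [gradient_shellDefiningFunction, shellMultiplier, real_inner_smul_left, inner_add_right,
    inner_smul_right, horth, real_inner_self_eq_norm_sq, add_zero]
  rcases hx with hr | hr <;> rw [hr]
  · simp [shellWeight_self ha.ne']
  · have hlt : a ^ 2 < b ^ 2 := pow_lt_pow_left₀ hab ha.le two_ne_zero
    have hφ0 := shellWeight_nonneg (n := finrank ℝ K) ha.le hab.le
    exact mul_nonpos_of_nonpos_of_nonneg (by linarith) (by positivity)

end Shell

section ShellSolution

variable {H : Type*} [NormedAddCommGroup H] [InnerProductSpace ℝ H] [FiniteDimensional ℝ H]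
  {K : Submodule ℝ H} {a b : ℝ} {f F : ℝ → ℝ} {u : H → ℝ}

/-- The energy density of `∇ u` along `K`, weighted as in `shellMultiplier K a`: what is left over
in the supercritical Pohozaev identity of a shell. -/
def shellEnergy (K : Submodule ℝ H) (a : ℝ) (u : H → ℝ) (x : H) : ℝ :=
  shellWeight (finrank ℝ K) a ‖K.starProjection x‖ * ‖K.starProjection (∇ u x)‖ ^ 2

theorem shellEnergy_nonneg (ha : 0 ≤ a) {x : H} (hx : a ≤ ‖K.starProjection x‖) :
    0 ≤ shellEnergy K a u x :=
  mul_nonneg (shellWeight_nonneg ha hx) (sq_nonneg _)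

theorem shellEnergy_le (ha : 0 ≤ a) (x : H) : shellEnergy K a u x ≤ ‖∇ u x‖ ^ 2 :=
  (mul_le_of_le_one_left (sq_nonneg _) (shellWeight_le_one ha (norm_nonneg _))).trans <|
    pow_le_pow_left₀ (norm_nonneg _) (K.norm_starProjection_apply_le _) 2

theorem starProjection_gradient_eq_zero_of_shellEnergy_eq_zero (ha : 0 < a) {x : H}
    (hx : a < ‖K.starProjection x‖) (h : shellEnergy K a u x = 0) :
    K.starProjection (∇ u x) = 0 := by
  have hφ := shellWeight_pos
    (finrank_ne_zero_of_starProjection_ne_zero (norm_pos_iff.1 (ha.trans hx))) ha hx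
  simpa [shellEnergy, hφ.ne'] using h

theorem continuousOn_shellEnergy (hu : IsClassicalSolution f (shell K a b) u) (ha : 0 < a)
    (hab : a < b) : ContinuousOn (shellEnergy K a u) (shell K a b) := by
  have hΩ := (isDefiningFunction_shellDefiningFunction (K := K) ha hab).isOpen
  have hφ : ContinuousOn (fun x => shellWeight (finrank ℝ K) a ‖K.starProjection x‖)
      (shell K a b) := fun x hx =>
    (hasFDerivAt_shellWeight_norm_starProjection (norm_pos_iff.1
      (ha.trans hx.1))).continuousAt.continuousWithinAt
  exact hφ.mul ((K.starProjection.continuous.comp_continuousOn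
    (hu.contDiffOn_gradient hΩ).continuousOn).norm.pow 2)

/-- The weight `c = (k - 1) / 2`, with `k = finrank Kᗮ`, makes the terms in `‖∇u‖²` not coming from
`fderiv ℝ X` add up to `-‖∇u‖²`. -/
theorem pohozaevDensity_shellMultiplier_le (ha : 0 ≤ a)
    (hsuper : ∀ t, 2 * (finrank ℝ Kᗮ + 1) * F t ≤ (finrank ℝ Kᗮ - 1) * (t * f t))
    {x : H} (hx : K.starProjection x ≠ 0) :
    pohozaevDensity (shellMultiplier K a) u f F ((finrank ℝ Kᗮ - 1) / 2) x ≤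
      -((finrank ℝ K - 1) * shellEnergy K a u x) := by
  have hfderiv := inner_fderiv_shellMultiplier_le ha hx (∇ u x)
  rw [pohozaevDensity, shellEnergy, divergence_shellMultiplier hx]
  linarith [hsuper (u x)]

variable [MeasurableSpace H] [BorelSpace H] {μ : Measure H}

theorem integrableOn_inner_starProjection_gradient_sq
    (hu : IsClassicalSolution f (shell K a b) u) (ha : 0 < a) (hab : a < b)
    (hgrad : IntegrableOn (fun x => ‖∇ u x‖ ^ 2) (shell K a b) μ) :
    IntegrableOn (fun x => ⟪K.starProjection x, ∇ u x⟫ ^ 2) (shell K a b) μ := by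
  have hΩ := (isDefiningFunction_shellDefiningFunction (K := K) ha hab).isOpen
  have hcont : ContinuousOn (fun x => ⟪K.starProjection x, ∇ u x⟫ ^ 2) (shell K a b) :=
    (K.starProjection.continuous.continuousOn.inner (hu.contDiffOn_gradient hΩ).continuousOn).pow 2
  refine (hgrad.const_mul (b ^ 2)).mono' (hcont.aestronglyMeasurable hΩ.measurableSet)
    ((ae_restrict_iff' hΩ.measurableSet).2 (ae_of_all _ fun x hx => ?_))
  rw [Real.norm_of_nonneg (sq_nonneg _), ← mul_pow]
  refine sq_le_sq.2 (((abs_real_inner_le_norm _ _).trans ?_).trans (le_abs_self _))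
  gcongr
  exact hx.2.le

theorem integrableOn_pohozaevDensity_shellMultiplier
    (hu : IsClassicalSolution f (shell K a b) u) (ha : 0 < a) (hab : a < b)
    (hgrad : IntegrableOn (fun x => ‖∇ u x‖ ^ 2) (shell K a b) μ)
    (hF : IntegrableOn (fun x => F (u x)) (shell K a b) μ)
    (hf : IntegrableOn (fun x => u x * f (u x)) (shell K a b) μ) (c : ℝ) :
    IntegrableOn (pohozaevDensity (shellMultiplier K a) u f F c) (shell K a b) μ := by
  have hΩ := (isDefiningFunction_shellDefiningFunction (K := K) ha hab).isOpen
  have hPx : ∀ x ∈ shell K a b, K.starProjection x ≠ 0 := fun x hx =>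
    starProjection_ne_zero_of_mem_closure_shell ha hab (subset_closure hx)
  have hX : ContDiffOn ℝ 1 (shellMultiplier K a) (shell K a b) := fun x hx =>
    (contDiffAt_shellMultiplier (hPx x hx)).contDiffWithinAt
  have hgradu := (hu.contDiffOn_gradient hΩ).continuousOn
  have hquad : IntegrableOn (fun x => ⟪fderiv ℝ (shellMultiplier K a) x (∇ u x), ∇ u x⟫)
      (shell K a b) μ := by
    have hcont : ContinuousOn (fun x => ⟪fderiv ℝ (shellMultiplier K a) x (∇ u x), ∇ u x⟫)
        (shell K a b) :=
      ((hX.continuousOn_fderiv_of_isOpen hΩ le_rfl).clm_apply hgradu).inner hgradu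
    refine hgrad.mono' (hcont.aestronglyMeasurable hΩ.measurableSet)
      ((ae_restrict_iff' hΩ.measurableSet).2 (ae_of_all _ fun x hx => ?_))
    rw [Real.norm_of_nonneg (inner_fderiv_shellMultiplier_nonneg ha hx.1.le _)]
    have hn : (1 : ℝ) ≤ finrank ℝ K := by
      exact_mod_cast Nat.one_le_iff_ne_zero.2 (finrank_ne_zero_of_starProjection_ne_zero (hPx x hx))
    have hφ := shellWeight_nonneg (n := finrank ℝ K) ha.le hx.1.le
    exact (inner_fderiv_shellMultiplier_le ha.le (hPx x hx) _).trans <| sub_le_self _ <|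
      mul_nonneg (mul_nonneg (sub_nonneg.2 hn) hφ) (sq_nonneg _)
  refine ((hquad.sub (((hgrad.div_const 2).sub hF).const_mul (1 + finrank ℝ Kᗮ))).add
    ((hgrad.sub hf).const_mul c)).congr_fun (fun x hx => ?_) hΩ.measurableSet
  simp only [pohozaevDensity, divergence_shellMultiplier (hPx x hx), Pi.add_apply, Pi.sub_apply]

theorem integrableOn_shellEnergy
    (hu : IsClassicalSolution f (shell K a b) u) (ha : 0 < a) (hab : a < b)
    (hgrad : IntegrableOn (fun x => ‖∇ u x‖ ^ 2) (shell K a b) μ) :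
    IntegrableOn (shellEnergy K a u) (shell K a b) μ := by
  have hΩ := (isDefiningFunction_shellDefiningFunction (K := K) ha hab).isOpen
  refine hgrad.mono' ((continuousOn_shellEnergy hu ha hab).aestronglyMeasurable hΩ.measurableSet)
    ((ae_restrict_iff' hΩ.measurableSet).2 (ae_of_all _ fun x hx => ?_))
  rw [Real.norm_of_nonneg (shellEnergy_nonneg ha.le hx.1.le)]
  exact shellEnergy_le ha.le x

variable [μ.IsAddHaarMeasure]

theorem setIntegral_pohozaevDensity_shellMultiplier_nonneg
    (hu : IsClassicalSolution f (shell K a b) u) (hK : K ≠ ⊥) (ha : 0 < a) (hab : a < b)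
    (hf : Continuous f) (hF : ∀ t, HasDerivAt F (f t) t) (hF0 : F 0 = 0)
    (hgrad_int : IntegrableOn (fun x => ‖∇ u x‖ ^ 2) (shell K a b) μ)
    (hF_int : IntegrableOn (fun x => F (u x)) (shell K a b) μ)
    (hf_int : IntegrableOn (fun x => u x * f (u x)) (shell K a b) μ) (c : ℝ) :
    0 ≤ ∫ x in shell K a b, pohozaevDensity (shellMultiplier K a) u f F c x ∂μ := by
  have h := isDefiningFunction_shellDefiningFunction (K := K) ha hab
  have hX : ∀ x ∈ closure (shell K a b), ContDiffAt ℝ 1 (shellMultiplier K a) x := fun x hx =>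
    contDiffAt_shellMultiplier (starProjection_ne_zero_of_mem_closure_shell ha hab hx)
  have hu_int := (poincare_inequality h (hu.contDiffOn.of_le one_le_two)
    hu.continuousOn hu.eq_zero_of_mem_frontier (fun x hx => hx.2.le) hK
    (integrableOn_inner_starProjection_gradient_sq hu ha hab hgrad_int)).1
  exact hu.pohozaev_inequality h hf hF hF0
    (fun x hx => (hX x (subset_closure hx)).contDiffWithinAt)
    (fun x hx => (hX x hx).continuousAt.continuousWithinAt)
    (fun x hx => norm_shellMultiplier_le ha.le hx.1.le)
    (fun x hx => inner_gradient_shellMultiplier_nonpos ha hab hx) c hgrad_int hF_int hu_int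
    (integrableOn_pohozaevDensity_shellMultiplier hu ha hab hgrad_int hF_int hf_int c)

theorem setIntegral_shellEnergy_nonpos
    (hu : IsClassicalSolution f (shell K a b) u) (hK : 2 ≤ finrank ℝ K) (ha : 0 < a) (hab : a < b)
    (hf : Continuous f) (hF : ∀ t, HasDerivAt F (f t) t) (hF0 : F 0 = 0)
    (hsuper : ∀ t, 2 * (finrank ℝ Kᗮ + 1) * F t ≤ (finrank ℝ Kᗮ - 1) * (t * f t))
    (hgrad_int : IntegrableOn (fun x => ‖∇ u x‖ ^ 2) (shell K a b) μ)
    (hF_int : IntegrableOn (fun x => F (u x)) (shell K a b) μ)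
    (hf_int : IntegrableOn (fun x => u x * f (u x)) (shell K a b) μ) :
    ∫ x in shell K a b, shellEnergy K a u x ∂μ ≤ 0 := by
  have hΩ := (isDefiningFunction_shellDefiningFunction (K := K) ha hab).isOpen
  have hn : (0 : ℝ) < finrank ℝ K - 1 := sub_pos.2 (by exact_mod_cast hK)
  have hdensity : 0 ≤ ∫ x in shell K a b, -((finrank ℝ K - 1) * shellEnergy K a u x) ∂μ :=
    (setIntegral_pohozaevDensity_shellMultiplier_nonneg hu
      (Submodule.one_le_finrank_iff.1 (one_le_two.trans hK)) ha hab hf hF hF0 hgrad_int hF_int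
      hf_int _).trans <| setIntegral_mono_on
        (integrableOn_pohozaevDensity_shellMultiplier hu ha hab hgrad_int hF_int hf_int _)
        ((integrableOn_shellEnergy hu ha hab hgrad_int).const_mul _).neg hΩ.measurableSet
        fun x hx => pohozaevDensity_shellMultiplier_le ha.le hsuper (norm_pos_iff.1 (ha.trans hx.1))
  rw [integral_neg, integral_const_mul, neg_nonneg] at hdensity
  exact nonpos_of_mul_nonpos_right hdensity hn

theorem starProjection_gradient_eq_zero_of_setIntegral_shellEnergy_nonpos
    (hu : IsClassicalSolution f (shell K a b) u) (ha : 0 < a) (hab : a < b)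
    (hgrad : IntegrableOn (fun x => ‖∇ u x‖ ^ 2) (shell K a b) μ)
    (h : ∫ x in shell K a b, shellEnergy K a u x ∂μ ≤ 0) :
    ∀ x ∈ shell K a b, K.starProjection (∇ u x) = 0 := by
  have hΩ := (isDefiningFunction_shellDefiningFunction (K := K) ha hab).isOpen
  have hnonneg : ∀ x ∈ shell K a b, 0 ≤ shellEnergy K a u x := fun x hx =>
    shellEnergy_nonneg ha.le hx.1.le
  have hae : shellEnergy K a u =ᵐ[μ.restrict (shell K a b)] 0 :=
    (setIntegral_eq_zero_iff_of_nonneg_ae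
      ((ae_restrict_iff' hΩ.measurableSet).2 (ae_of_all _ hnonneg))
      (integrableOn_shellEnergy hu ha hab hgrad)).1
      (h.antisymm (setIntegral_nonneg hΩ.measurableSet hnonneg))
  exact fun x hx => starProjection_gradient_eq_zero_of_shellEnergy_eq_zero ha hx.1
    (Measure.eqOn_open_of_ae_eq hae hΩ (continuousOn_shellEnergy hu ha hab) continuousOn_const hx)

end ShellSolution

section Product

variable {H : Type*} [NormedAddCommGroup H] [InnerProductSpace ℝ H] [FiniteDimensional ℝ H]
  {ι : Type*} [Fintype ι]

theorem norm_gradient_sq_eq_sum (e : OrthonormalBasis ι ℝ H) (v : H → ℝ) (x : H) :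
    ‖∇ v x‖ ^ 2 = ∑ i, fderiv ℝ v x (e i) ^ 2 := by
  rw [gradient, LinearIsometryEquiv.norm_map, e.norm_dual]

theorem laplacian_eq_sum_fderiv_fderiv (e : OrthonormalBasis ι ℝ H) {v : H → ℝ} {x : H}
    (hv : DifferentiableAt ℝ (fderiv ℝ v) x) :
    (Δ v) x = ∑ i, fderiv ℝ (fun y => fderiv ℝ v y (e i)) x (e i) := by
  rw [laplacian_eq_iteratedFDeriv_orthonormalBasis v e]
  refine Finset.sum_congr rfl fun i _ => ?_
  rw [iteratedFDeriv_two_apply, fderiv_clm_apply hv (differentiableAt_const _)]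
  simp

theorem fderiv_comp_ofLp {V₁ V₂ : Type*} [NormedAddCommGroup V₁] [NormedSpace ℝ V₁]
    [NormedAddCommGroup V₂] [NormedSpace ℝ V₂] (v : V₁ × V₂ → ℝ) (x w : WithLp 2 (V₁ × V₂)) :
    fderiv ℝ (v ∘ WithLp.ofLp) x w = fderiv ℝ v x.ofLp w.ofLp :=
  DFunLike.congr_fun (WithLp.prodContinuousLinearEquiv 2 ℝ V₁ V₂).comp_right_fderiv w

variable {E₁ E₂ : Type*} [NormedAddCommGroup E₁] [InnerProductSpace ℝ E₁]
  [NormedAddCommGroup E₂] [InnerProductSpace ℝ E₂]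

variable (E₁ E₂) in
/-- The summand `E₁ × 0` of the Euclidean product `E₁ × E₂`. -/
def firstSummand : Submodule ℝ (WithLp 2 (E₁ × E₂)) :=
  (WithLp.sndL 2 ℝ E₁ E₂).ker

variable [FiniteDimensional ℝ E₁] [FiniteDimensional ℝ E₂]

theorem norm_starProjection_firstSummand (x : WithLp 2 (E₁ × E₂)) :
    ‖(firstSummand E₁ E₂).starProjection x‖ = ‖x.fst‖ := by
  have hproj : (firstSummand E₁ E₂).starProjection x = WithLp.toLp 2 (x.fst, 0) := by
    have hmem : WithLp.toLp 2 (x.fst, 0) ∈ firstSummand E₁ E₂ := by simp [firstSummand]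
    refine Submodule.eq_starProjection_of_mem_orthogonal hmem fun y hy => ?_
    have hy : y.snd = 0 := hy
    simp [WithLp.prod_inner_apply, hy]
  rw [hproj, WithLp.norm_toLp_fst]

theorem finrank_withLp_prod :
    finrank ℝ (WithLp 2 (E₁ × E₂)) = finrank ℝ E₁ + finrank ℝ E₂ :=
  (WithLp.linearEquiv 2 ℝ (E₁ × E₂)).finrank_eq.trans finrank_prod

theorem finrank_firstSummand : finrank ℝ (firstSummand E₁ E₂) = finrank ℝ E₁ := by
  have hrank := (WithLp.sndL 2 ℝ E₁ E₂).toLinearMap.finrank_range_add_finrank_ker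
  have hsurj : (WithLp.sndL 2 ℝ E₁ E₂).range = ⊤ :=
    LinearMap.range_eq_top.2 fun z => ⟨WithLp.toLp 2 (0, z), rfl⟩
  rw [hsurj, finrank_top, finrank_withLp_prod, add_comm] at hrank
  exact Nat.add_right_cancel hrank

theorem finrank_firstSummand_orthogonal : finrank ℝ (firstSummand E₁ E₂)ᗮ = finrank ℝ E₂ := by
  have hrank := (firstSummand E₁ E₂).finrank_add_finrank_orthogonal
  rw [finrank_firstSummand, finrank_withLp_prod] at hrank
  exact Nat.add_left_cancel hrank

theorem integrableOn_comp_ofLp [MeasurableSpace E₁] [BorelSpace E₁] [MeasurableSpace E₂]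
    [BorelSpace E₂] {v : E₁ × E₂ → ℝ} {Ω : Set (E₁ × E₂)} (hv : IntegrableOn v Ω) :
    IntegrableOn (fun x => v (WithLp.ofLp x)) (@WithLp.ofLp 2 _ ⁻¹' Ω) :=
  ((WithLp.volume_preserving_ofLp E₁ E₂).integrableOn_comp_preimage
    (MeasurableEquiv.toLp 2 (E₁ × E₂)).symm.measurableEmbedding).2 hv

end Product

section Coordinates

variable {N m : ℕ} {a b : ℝ} {u : E (m + 1) × E (N - m - 1) → ℝ}
  {x : WithLp 2 (E (m + 1) × E (N - m - 1))}

theorem shell_firstSummand :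
    shell (firstSummand (E (m + 1)) (E (N - m - 1))) a b = WithLp.ofLp ⁻¹' Omega N m a b := by
  ext x
  simp only [shell, Omega, norm_starProjection_firstSummand]
  rfl

theorem isOpen_Omega : IsOpen (Omega N m a b) :=
  (isOpen_lt continuous_const continuous_fst.norm).inter
    (isOpen_lt continuous_fst.norm continuous_const)

theorem norm_gradient_comp_ofLp_sq (u : E (m + 1) × E (N - m - 1) → ℝ)
    (x : WithLp 2 (E (m + 1) × E (N - m - 1))) :
    ‖∇ (u ∘ WithLp.ofLp) x‖ ^ 2 = gradSq N m u x.ofLp := by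
  rw [norm_gradient_sq_eq_sum ((EuclideanSpace.basisFun _ ℝ).prod (EuclideanSpace.basisFun _ ℝ))]
  simp [gradSq, fderiv_comp_ofLp]

theorem laplacian_comp_ofLp (hu : ContDiffAt ℝ 2 u x.ofLp) :
    (Δ (u ∘ WithLp.ofLp : WithLp 2 (E (m + 1) × E (N - m - 1)) → ℝ)) x = lap N m u x.ofLp := by
  have hv : ContDiffAt ℝ 2 (u ∘ WithLp.ofLp : WithLp 2 (E (m + 1) × E (N - m - 1)) → ℝ) x :=
    hu.comp x (WithLp.prodContinuousLinearEquiv 2 ℝ (E (m + 1)) (E (N - m - 1))).contDiff.contDiffAt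
  rw [laplacian_eq_sum_fderiv_fderiv
    ((EuclideanSpace.basisFun _ ℝ).prod (EuclideanSpace.basisFun _ ℝ))
    ((hv.fderiv_right (m := 1) le_rfl).differentiableAt one_ne_zero)]
  have hdd2 (w : WithLp 2 (E (m + 1) × E (N - m - 1))) :
      fderiv ℝ (fun y => fderiv ℝ (u ∘ WithLp.ofLp) y w) x w = dd2 u x.ofLp w.ofLp := by
    simp only [fderiv_comp_ofLp, dd2]
    exact fderiv_comp_ofLp (fun y => fderiv ℝ u y w.ofLp) x w
  simp [lap, hdd2]

theorem isClassicalSolution_comp_ofLp {f : ℝ → ℝ} {Ω : Set (E (m + 1) × E (N - m - 1))}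
    (hΩ : IsOpen Ω) (hu2 : ContDiffOn ℝ 2 u Ω) (hu1 : ContinuousOn u (closure Ω))
    (hu1' : ContinuousOn (fderiv ℝ u) (closure Ω)) (heq : ∀ x ∈ Ω, -lap N m u x = f (u x))
    (hbd : ∀ x ∈ frontier Ω, u x = 0) :
    IsClassicalSolution f (WithLp.ofLp ⁻¹' Ω) (u ∘ @WithLp.ofLp 2 _) := by
  let e := WithLp.prodContinuousLinearEquiv 2 ℝ (E (m + 1)) (E (N - m - 1))
  have hclosure : closure (WithLp.ofLp ⁻¹' Ω) = e ⁻¹' closure Ω :=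
    (e.toHomeomorph.preimage_closure Ω).symm
  have hfrontier : frontier (WithLp.ofLp ⁻¹' Ω) = e ⁻¹' frontier Ω :=
    (e.toHomeomorph.preimage_frontier Ω).symm
  refine ⟨hu2.comp e.contDiff.contDiffOn fun _ hx => hx, ?_, ?_, fun x hx => ?_, fun x hx => ?_⟩
  · rw [hclosure]
    exact hu1.comp e.continuous.continuousOn fun _ hx => hx
  · rw [hclosure]
    have hfderiv : fderiv ℝ (u ∘ @WithLp.ofLp 2 _) =
        fun x => (fderiv ℝ u (e x)).comp (e : _ →L[ℝ] _) := by
      ext1 x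
      exact e.comp_right_fderiv
    rw [hfderiv]
    exact (hu1'.comp e.continuous.continuousOn fun _ hx => hx).clm_comp continuousOn_const
  · rw [laplacian_comp_ofLp (hu2.contDiffAt (hΩ.mem_nhds hx))]
    exact heq _ hx
  · exact hbd _ (hfrontier ▸ hx : x ∈ e ⁻¹' frontier Ω)

end Coordinates

section PowerNonlinearity

variable {k p : ℝ}

theorem hasDerivAt_abs_rpow_div (hp : 1 < p) (t : ℝ) :
    HasDerivAt (fun s => |s| ^ p / p) (|t| ^ (p - 2) * t) t := by
  refine ((hasDerivAt_abs_rpow t hp).div_const p).congr_deriv ?_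
  rw [mul_assoc, mul_div_cancel_left₀ _ (zero_lt_one.trans hp).ne']

theorem mul_abs_rpow_mul_self (hp : p ≠ 0) (t : ℝ) : t * (|t| ^ (p - 2) * t) = |t| ^ p := by
  rcases eq_or_ne t 0 with rfl | ht
  · simp [hp]
  · rw [mul_left_comm, ← sq, ← sq_abs, ← Real.rpow_natCast, ← Real.rpow_add (abs_pos.2 ht)]
    norm_num

theorem two_lt_of_supercritical (hk : 1 < k) (hp : 2 * (k + 1) / (k - 1) ≤ p) : 2 < p := by
  refine lt_of_lt_of_le ?_ hp
  rw [lt_div_iff₀ (sub_pos.2 hk)]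
  linarith

theorem abs_rpow_div_le_of_supercritical (hk : 1 < k) (hp : 2 * (k + 1) / (k - 1) ≤ p) (t : ℝ) :
    2 * (k + 1) * (|t| ^ p / p) ≤ (k - 1) * (t * (|t| ^ (p - 2) * t)) := by
  have hp0 : 0 < p := zero_lt_two.trans (two_lt_of_supercritical hk hp)
  have hpk : 2 * (k + 1) / p ≤ k - 1 := (div_le_comm₀ (sub_pos.2 hk) hp0).1 hp
  rw [mul_abs_rpow_mul_self hp0.ne', mul_div_left_comm, mul_comm (k - 1)]
  gcongr

end PowerNonlinearity

/-- The cylindrical shell around the orthogonal complement of any subspace `K`, and any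
nonlinearity `f` with primitive `F` whose growth is at least critical in dimension
`1 + dim Kᗮ`. -/
theorem _root_.no_nontrivial_solution_supercritical_general {H : Type*} [NormedAddCommGroup H]
    [InnerProductSpace ℝ H] [FiniteDimensional ℝ H] [MeasurableSpace H] [BorelSpace H]
    {μ : Measure H} [μ.IsAddHaarMeasure] {K : Submodule ℝ H} (hK : 2 ≤ finrank ℝ K) {a b : ℝ}
    (ha : 0 < a) (hab : a < b) {f F : ℝ → ℝ} (hf : Continuous f)
    (hF : ∀ t, HasDerivAt F (f t) t) (hF0 : F 0 = 0)
    (hsuper : ∀ t, 2 * (finrank ℝ Kᗮ + 1) * F t ≤ (finrank ℝ Kᗮ - 1) * (t * f t)) {u : H → ℝ}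
    (hu : IsClassicalSolution f (shell K a b) u)
    (hgrad_int : IntegrableOn (fun x => ‖∇ u x‖ ^ 2) (shell K a b) μ)
    (hF_int : IntegrableOn (fun x => F (u x)) (shell K a b) μ)
    (hf_int : IntegrableOn (fun x => u x * f (u x)) (shell K a b) μ) :
    EqOn u 0 (shell K a b) := by
  have henergy := setIntegral_shellEnergy_nonpos hu hK ha hab hf hF hF0 hsuper hgrad_int hF_int
    hf_int
  have hgrad := starProjection_gradient_eq_zero_of_setIntegral_shellEnergy_nonpos hu ha hab
    hgrad_int henergy
  refine eqOn_zero_of_inner_starProjection_eq_zero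
    (isDefiningFunction_shellDefiningFunction ha hab) (hu.contDiffOn.of_le one_le_two)
    hu.continuousOn hu.eq_zero_of_mem_frontier (fun x hx => hx.2.le)
    (Submodule.one_le_finrank_iff.1 (one_le_two.trans hK)) fun x hx => ?_
  rw [← inner_starProjection_self_left, hgrad x hx, inner_zero_right]

end Pohozaev

/-- Theorem 1: if `1 ≤ m < N-2` and `p ≥ 2(N-m)/(N-m-2)`, problem (1.2) has no
nontrivial solution `u ∈ C²(Ω) ∩ C¹(Ω̄)`. -/
theorem no_nontrivial_solution_supercritical
    (N m : ℕ) (hN : 2 ≤ N) (hm : 1 ≤ m) (hmN : m + 2 < N)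
    (a b : ℝ) (ha : 0 < a) (hab : a < b)
    (p : ℝ) (hp : 2 * ((N : ℝ) - m) / ((N : ℝ) - m - 2) ≤ p)
    (u : E (m + 1) × E (N - m - 1) → ℝ)
    (hu2 : ContDiffOn ℝ 2 u (Omega N m a b))
    (hu1 : ContinuousOn u (closure (Omega N m a b)))
    (hu1' : ContinuousOn (fderiv ℝ u) (closure (Omega N m a b)))
    (heq : ∀ x ∈ Omega N m a b, - lap N m u x = |u x| ^ (p - 2) * u x)
    (hbd : ∀ x ∈ frontier (Omega N m a b), u x = 0)
    (hint1 : IntegrableOn (gradSq N m u) (Omega N m a b))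
    (hint2 : IntegrableOn (fun x => |u x| ^ p) (Omega N m a b)) :
    ∀ x ∈ Omega N m a b, u x = 0 := by
  have hk : ((N - m - 1 : ℕ) : ℝ) = N - m - 1 := by
    rw [Nat.sub_sub, Nat.cast_sub (by lia), Nat.cast_add_one, sub_sub]
  have hk1 : (1 : ℝ) < (N - m - 1 : ℕ) := by exact_mod_cast (by lia : 1 < N - m - 1)
  have hpk : 2 * (((N - m - 1 : ℕ) : ℝ) + 1) / ((N - m - 1 : ℕ) - 1) ≤ p := by
    rwa [hk, sub_add_cancel, sub_sub, one_add_one_eq_two]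
  have hp2 : 2 < p := Pohozaev.two_lt_of_supercritical hk1 hpk
  have hsol := Pohozaev.isClassicalSolution_comp_ofLp (f := fun t => |t| ^ (p - 2) * t)
    Pohozaev.isOpen_Omega hu2 hu1 hu1' heq hbd
  have hgrad_int := Pohozaev.integrableOn_comp_ofLp hint1
  have hrpow_int := Pohozaev.integrableOn_comp_ofLp hint2
  simp only [← Pohozaev.norm_gradient_comp_ofLp_sq] at hgrad_int
  rw [← Pohozaev.shell_firstSummand] at hsol hgrad_int hrpow_int
  have hzero := no_nontrivial_solution_supercritical_general
    (by simpa [Pohozaev.finrank_firstSummand] using hm) ha hab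
    ((continuous_abs.rpow_const fun _ => Or.inr (by linarith)).mul continuous_id)
    (Pohozaev.hasDerivAt_abs_rpow_div (by linarith)) (by simp [show p ≠ 0 by positivity])
    (by simpa [Pohozaev.finrank_firstSummand_orthogonal] using
      Pohozaev.abs_rpow_div_le_of_supercritical hk1 hpk)
    hsol hgrad_int (hrpow_int.div_const p)
    (by simpa [Pohozaev.mul_abs_rpow_mul_self (zero_lt_two.trans hp2).ne'] using hrpow_int)
  exact fun x hx => hzero (x := WithLp.toLp 2 x) (Pohozaev.shell_firstSummand ▸ hx)
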